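/- Alon–Shapira theorem: every hereditary graph property P is testable, i.e., there exists a graph property P' such that: (a) if a finite simple graph G has property P, then for every 1 ≤ k ≤ |V(G)|, at least 2/3 of the k-element subsets S ⊆ V(G) induce a subgraph G[S] having property P'; and (b) for every ε > 0 there is an integer k_ε ≥ 1 such that if G is a finite simple graph whose edit distance from P is at least ε|V(G)|² (i.e., every graph on V(G) with property P differs from G in at least ε|V(G)|² adjacencies), then for every k_ε ≤ k ≤ |V(G)|, at most 1/3 of the k-element subsets S ⊆ V(G) induce a subgraph G[S] having property P'. -/

import Mathlib

open Finset
open scoped Classical symmDiff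

-- The subgraph of `G` induced by the vertex subset `S`, presented as a graph on `Fin S.card`
-- (via the order isomorphism between `Fin S.card` and `S`).
noncomputable def inducedCopy {n : ℕ} (G : SimpleGraph (Fin n)) (S : Finset (Fin n)) :
    SimpleGraph (Fin S.card) :=
  SimpleGraph.comap (fun i => (S.orderIsoOfFin rfl i).1) G

-- A graph property: an isomorphism-closed class of finite simple graphs.
def IsGraphProperty (P : ∀ n : ℕ, Set (SimpleGraph (Fin n))) : Prop :=
  ∀ (n : ℕ) (G G' : SimpleGraph (Fin n)), Nonempty (G ≃g G') → (G ∈ P n → G' ∈ P n)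

-- A hereditary graph property: closed under taking induced subgraphs.
def IsHereditary (P : ∀ n : ℕ, Set (SimpleGraph (Fin n))) : Prop :=
  IsGraphProperty P ∧
    ∀ (n : ℕ) (G : SimpleGraph (Fin n)), G ∈ P n →
      ∀ S : Finset (Fin n), inducedCopy G S ∈ P S.card

/-- Sum of `f` over a rectangle. -/
noncomputable def eS {n : ℕ} (f : Fin n → Fin n → ℝ) (A B : Finset (Fin n)) : ℝ :=
  ∑ a ∈ A, ∑ b ∈ B, f a b

/-- Density of `f` on a rectangle. -/
noncomputable def dS {n : ℕ} (f : Fin n → Fin n → ℝ) (A B : Finset (Fin n)) : ℝ :=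
  eS f A B / ((A.card : ℝ) * (B.card : ℝ))

/-- Cut-regular pairs. -/
def RegP {n : ℕ} (f : Fin n → Fin n → ℝ) (η : ℝ) (X Y : Finset (Fin n)) : Prop :=
  ∀ A ⊆ X, ∀ B ⊆ Y, |eS f A B - dS f X Y * ((A.card : ℝ) * (B.card : ℝ))| ≤
    η * ((X.card : ℝ) * (Y.card : ℝ))

/-- The cell of `u` in the partition `p`. -/
noncomputable def cl {n : ℕ} {κ : Type*} (p : Fin n → κ) (u : Fin n) : Finset (Fin n) :=
  univ.filter (fun v => p v = p u)

/-- The conditional expectation of `f` on the partition `p`. -/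
noncomputable def av {n : ℕ} {κ : Type*} (f : Fin n → Fin n → ℝ) (p : Fin n → κ) (u v : Fin n) : ℝ :=
  dS f (cl p u) (cl p v)

/-- Energy of a partition. -/
noncomputable def en {n : ℕ} {κ : Type*} (f : Fin n → Fin n → ℝ) (p : Fin n → κ) : ℝ :=
  ∑ u, ∑ v, (av f p u v) ^ 2

/-- Number of pairs of points lying in irregular pairs of cells. -/
noncomputable def irr {n : ℕ} {κ : Type*} (f : Fin n → Fin n → ℝ) (η : ℝ) (p : Fin n → κ) : ℝ :=
  ∑ u, ∑ v, if RegP f η (cl p u) (cl p v) then (0 : ℝ) else 1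

/-- `q` refines `p`. -/
def Refines {n : ℕ} {κ κ' : Type*} (q : Fin n → κ') (p : Fin n → κ) : Prop :=
  ∀ u v, q u = q v → p u = p v

lemma mem_cl {n : ℕ} {κ : Type*} (p : Fin n → κ) (u v : Fin n) : v ∈ cl p u ↔ p v = p u := by
  simp [cl]

lemma cl_congr {n : ℕ} {κ : Type*} (p : Fin n → κ) {u v : Fin n} (h : p u = p v) :
    cl p u = cl p v := by
  ext w; simp [mem_cl, h]

lemma self_mem_cl {n : ℕ} {κ : Type*} (p : Fin n → κ) (u : Fin n) : u ∈ cl p u := by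
  simp [mem_cl]

lemma cl_card_pos {n : ℕ} {κ : Type*} (p : Fin n → κ) (u : Fin n) : 0 < ((cl p u).card : ℝ) := by
  exact_mod_cast Finset.card_pos.2 ⟨u, self_mem_cl p u⟩

lemma cl_comp {n : ℕ} {κ κ' : Type*} (p : Fin n → κ) (i : κ → κ') (hi : Function.Injective i) :
    cl (fun u => i (p u)) = cl p := by
  funext u; ext w; simp [mem_cl, hi.eq_iff]

lemma en_comp {n : ℕ} {κ κ' : Type*} (f : Fin n → Fin n → ℝ) (p : Fin n → κ) (i : κ → κ')
    (hi : Function.Injective i) : en f (fun u => i (p u)) = en f p := by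
  simp only [en, av, cl_comp p i hi]

lemma irr_comp {n : ℕ} {κ κ' : Type*} (f : Fin n → Fin n → ℝ) (η : ℝ) (p : Fin n → κ) (i : κ → κ')
    (hi : Function.Injective i) : irr f η (fun u => i (p u)) = irr f η p := by
  simp only [irr, cl_comp p i hi]

lemma sum_cl_swap {n : ℕ} {κ : Type*} (p : Fin n → κ) (g : Fin n → Fin n → ℝ) :
    ∑ u, ∑ u' ∈ cl p u, g u u' = ∑ u', ∑ u ∈ cl p u', g u u' := by
  apply Finset.sum_comm'
  intro x y
  simp [mem_cl, eq_comm]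

/-- The projection property. -/
lemma proj {n : ℕ} {κ : Type*} (f : Fin n → Fin n → ℝ) (p : Fin n → κ) (φ : Fin n → Fin n → ℝ)
    (hφ : ∀ u u' v v', p u = p u' → p v = p v' → φ u v = φ u' v') :
    ∑ u, ∑ v, av f p u v * φ u v = ∑ u, ∑ v, f u v * φ u v := by
  have h1 : ∀ u v, av f p u v * φ u v =
      ∑ u' ∈ cl p u, ∑ v' ∈ cl p v,
        f u' v' * φ u' v' / (((cl p u').card : ℝ) * ((cl p v').card : ℝ)) := by
    intro u v
    rw [av, dS, eS, div_mul_eq_mul_div, Finset.sum_mul, Finset.sum_div]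
    refine Finset.sum_congr rfl fun u' hu' => ?_
    rw [Finset.sum_mul, Finset.sum_div]
    refine Finset.sum_congr rfl fun v' hv' => ?_
    rw [mem_cl] at hu' hv'
    rw [cl_congr p hu', cl_congr p hv', hφ u' u v' v hu' hv']
  calc ∑ u, ∑ v, av f p u v * φ u v
      = ∑ u, ∑ u' ∈ cl p u, ∑ v, ∑ v' ∈ cl p v,
        f u' v' * φ u' v' / (((cl p u').card : ℝ) * ((cl p v').card : ℝ)) := by
        refine Finset.sum_congr rfl fun u _ => ?_
        rw [Finset.sum_comm]
        exact Finset.sum_congr rfl fun v _ => h1 u v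
    _ = ∑ u', ∑ u ∈ cl p u', ∑ v', ∑ v ∈ cl p v',
        f u' v' * φ u' v' / (((cl p u').card : ℝ) * ((cl p v').card : ℝ)) := by
        rw [sum_cl_swap]
        refine Finset.sum_congr rfl fun u' _ => Finset.sum_congr rfl fun u _ => ?_
        rw [sum_cl_swap]
    _ = _ := by
        refine Finset.sum_congr rfl fun u' _ => ?_
        rw [Finset.sum_const, nsmul_eq_mul, Finset.mul_sum]
        refine Finset.sum_congr rfl fun v' _ => ?_
        rw [Finset.sum_const, nsmul_eq_mul]
        have := (cl_card_pos p u').ne'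
        have := (cl_card_pos p v').ne'
        field_simp

lemma sum_av {n : ℕ} {κ : Type*} (f : Fin n → Fin n → ℝ) (p : Fin n → κ) :
    ∑ u, ∑ v, av f p u v = ∑ u, ∑ v, f u v := by
  simpa using proj f p (fun _ _ => 1) (fun _ _ _ _ _ _ => rfl)

lemma av_congr {n : ℕ} {κ : Type*} (f : Fin n → Fin n → ℝ) (p : Fin n → κ) {u u' v v' : Fin n}
    (hu : p u = p u') (hv : p v = p v') : av f p u v = av f p u' v' := by
  rw [av, av, cl_congr p hu, cl_congr p hv]

lemma pyth {n : ℕ} {κ κ' : Type*} (f : Fin n → Fin n → ℝ) (p : Fin n → κ) (q : Fin n → κ')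
    (h : Refines q p) :
    ∑ u, ∑ v, (av f q u v - av f p u v) ^ 2 = en f q - en f p := by
  have h1 := proj f q (av f p) (fun u u' v v' hu hv => av_congr f p (h _ _ hu) (h _ _ hv))
  have h2 := proj f p (av f p) (fun u u' v v' hu hv => av_congr f p hu hv)
  have h3 : ∑ u, ∑ v, (av f q u v - av f p u v) ^ 2 =
      en f q - 2 * (∑ u, ∑ v, av f q u v * av f p u v) + ∑ u, ∑ v, av f p u v * av f p u v := by
    rw [en, Finset.mul_sum, ← Finset.sum_sub_distrib, ← Finset.sum_add_distrib]
    refine Finset.sum_congr rfl fun u _ => ?_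
    rw [Finset.mul_sum, ← Finset.sum_sub_distrib, ← Finset.sum_add_distrib]
    refine Finset.sum_congr rfl fun v _ => ?_
    ring
  have h4 : en f p = ∑ u, ∑ v, av f p u v * av f p u v := by
    simp only [en, sq]
  rw [h3, h1, ← h2, h4]; ring

lemma eS_nonneg {n : ℕ} {f : Fin n → Fin n → ℝ} (hf : ∀ u v, 0 ≤ f u v) (A B : Finset (Fin n)) :
    0 ≤ eS f A B := Finset.sum_nonneg fun _ _ => Finset.sum_nonneg fun _ _ => hf _ _

lemma eS_le {n : ℕ} {f : Fin n → Fin n → ℝ} (hf : ∀ u v, f u v ≤ 1) (A B : Finset (Fin n)) :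
    eS f A B ≤ (A.card : ℝ) * (B.card : ℝ) := by
  calc eS f A B ≤ ∑ a ∈ A, ∑ b ∈ B, (1 : ℝ) :=
        Finset.sum_le_sum fun _ _ => Finset.sum_le_sum fun _ _ => hf _ _
    _ = _ := by simp

lemma dS_nonneg {n : ℕ} {f : Fin n → Fin n → ℝ} (hf : ∀ u v, 0 ≤ f u v) (A B : Finset (Fin n)) :
    0 ≤ dS f A B := div_nonneg (eS_nonneg hf A B) (by positivity)

lemma dS_le {n : ℕ} {f : Fin n → Fin n → ℝ} (hf : ∀ u v, f u v ≤ 1) (A B : Finset (Fin n)) :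
    dS f A B ≤ 1 := div_le_one_of_le₀ (eS_le hf A B) (by positivity)

lemma en_le {n : ℕ} {κ : Type*} {f : Fin n → Fin n → ℝ} (h0 : ∀ u v, 0 ≤ f u v)
    (h1 : ∀ u v, f u v ≤ 1) (p : Fin n → κ) : en f p ≤ (n : ℝ) ^ 2 := by
  calc en f p ≤ ∑ u : Fin n, ∑ v : Fin n, (1 : ℝ) :=
        Finset.sum_le_sum fun u _ => Finset.sum_le_sum fun v _ => by
          have := dS_nonneg h0 (cl p u) (cl p v)
          have := dS_le h1 (cl p u) (cl p v)
          rw [av]; exact pow_le_one₀ ‹_› ‹_›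
    _ = _ := by simp [sq]

lemma en_nonneg {n : ℕ} {κ : Type*} (f : Fin n → Fin n → ℝ) (p : Fin n → κ) : 0 ≤ en f p :=
  Finset.sum_nonneg fun _ _ => Finset.sum_nonneg fun _ _ => sq_nonneg _

/-- Cauchy-Schwarz on a rectangle. -/
lemma rect_cs {n : ℕ} (D : Fin n → Fin n → ℝ) (A B X Y : Finset (Fin n)) (hA : A ⊆ X) (hB : B ⊆ Y) :
    (eS D A B) ^ 2 ≤ ((X.card : ℝ) * (Y.card : ℝ)) * eS (fun u v => D u v ^ 2) X Y := by
  have h1 : eS D A B = ∑ x ∈ A ×ˢ B, D x.1 x.2 := by rw [eS, Finset.sum_product]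
  have h2 : eS (fun u v => D u v ^ 2) X Y = ∑ x ∈ X ×ˢ Y, D x.1 x.2 ^ 2 := by
    rw [eS, Finset.sum_product]
  rw [h1, h2]
  have h3 : (∑ x ∈ A ×ˢ B, D x.1 x.2) ^ 2 ≤ ((A ×ˢ B).card : ℝ) * ∑ x ∈ A ×ˢ B, D x.1 x.2 ^ 2 :=
    sq_sum_le_card_mul_sum_sq
  have h4 : A ×ˢ B ⊆ X ×ˢ Y := Finset.product_subset_product hA hB
  have h5 : ((A ×ˢ B).card : ℝ) ≤ (X.card : ℝ) * (Y.card : ℝ) := by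
    rw [← Nat.cast_mul, ← Finset.card_product]; exact_mod_cast Finset.card_le_card h4
  refine h3.trans (mul_le_mul h5 ?_ (Finset.sum_nonneg fun _ _ => sq_nonneg _) (by positivity))
  exact Finset.sum_le_sum_of_subset_of_nonneg h4 fun _ _ _ => sq_nonneg _

/-- Number of colours after one refinement step. -/
noncomputable def stepK (k : ℕ) : ℕ := Fintype.card (Fin k × (Fin k × Fin k → Bool × Bool))

lemma increment {n k : ℕ} (f : Fin n → Fin n → ℝ) {η : ℝ} (hη : 0 < η) (p : Fin n → Fin k) :
    ∃ q : Fin n → Fin (stepK k), Refines q p ∧ η ^ 2 * irr f η p ≤ en f q - en f p := by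
  have hw : ∀ i j : Fin k, ∃ A B : Finset (Fin n), ∀ u v, p u = i → p v = j →
      ¬ RegP f η (cl p u) (cl p v) → A ⊆ cl p u ∧ B ⊆ cl p v ∧
      η * (((cl p u).card : ℝ) * ((cl p v).card : ℝ)) <
        |eS f A B - dS f (cl p u) (cl p v) * ((A.card : ℝ) * (B.card : ℝ))| := by
    intro i j
    by_cases h : ∃ u v, p u = i ∧ p v = j ∧ ¬ RegP f η (cl p u) (cl p v)
    · obtain ⟨u0, v0, hu0, hv0, hR⟩ := h
      unfold RegP at hR
      push Not at hR
      obtain ⟨A, hA, B, hB, hAB⟩ := hR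
      refine ⟨A, B, fun u v hu hv _ => ?_⟩
      rw [cl_congr p (hu.trans hu0.symm), cl_congr p (hv.trans hv0.symm)]
      exact ⟨hA, hB, hAB⟩
    · refine ⟨∅, ∅, fun u v hu hv hR => absurd ⟨u, v, hu, hv, hR⟩ h⟩
  choose A B hAB using hw
  let q0 : Fin n → Fin k × (Fin k × Fin k → Bool × Bool) :=
    fun u => (p u, fun ij => (decide (u ∈ A ij.1 ij.2), decide (u ∈ B ij.1 ij.2)))
  let e : Fin k × (Fin k × Fin k → Bool × Bool) ≃ Fin (stepK k) :=
    Fintype.equivFin (Fin k × (Fin k × Fin k → Bool × Bool))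
  have hq0 : Refines q0 p := fun u v h => congrArg Prod.fst h
  refine ⟨fun u => e (q0 u), fun u v h => hq0 u v (e.injective h), ?_⟩
  rw [en_comp f q0 e e.injective, ← pyth f p q0 hq0]
  set D : Fin n → Fin n → ℝ := fun u v => (av f q0 u v - av f p u v) with hD
  rw [show ∑ u, ∑ v, (av f q0 u v - av f p u v) ^ 2 = ∑ u, ∑ v, (fun u v => D u v ^ 2) u v from rfl,
    ← sum_av (fun u v => D u v ^ 2) p, irr, Finset.mul_sum]
  refine Finset.sum_le_sum fun u _ => ?_
  rw [Finset.mul_sum]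
  refine Finset.sum_le_sum fun v _ => ?_
  have hnn : 0 ≤ av (fun u v => D u v ^ 2) p u v := dS_nonneg (fun _ _ => sq_nonneg _) _ _
  by_cases hR : RegP f η (cl p u) (cl p v)
  · simpa [hR] using hnn
  · rw [if_neg hR, mul_one]
    obtain ⟨hA, hB, hlt⟩ := hAB (p u) (p v) u v rfl rfl hR
    set A' := A (p u) (p v) with hA'
    set B' := B (p u) (p v) with hB'
    have key : eS D A' B' =
        eS f A' B' - dS f (cl p u) (cl p v) * ((A'.card : ℝ) * (B'.card : ℝ)) := by
      have hpr := proj f q0 (fun x y => (if x ∈ A' then (1 : ℝ) else 0) * (if y ∈ B' then 1 else 0))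
        (by
          intro x x' y y' hx hy
          have h1 := congrFun (congrArg Prod.snd hx) (p u, p v)
          have h2 := congrFun (congrArg Prod.snd hy) (p u, p v)
          simp only [q0, Prod.mk.injEq, decide_eq_decide] at h1 h2
          simp only [hA', hB', h1.1, h2.2])
      have hgen : ∀ g : Fin n → Fin n → ℝ, ∑ x, ∑ y, g x y *
          ((if x ∈ A' then (1 : ℝ) else 0) * (if y ∈ B' then 1 else 0)) = eS g A' B' := by
        intro g
        rw [eS]
        rw [← Finset.sum_filter_add_sum_filter_not univ (fun x => x ∈ A')]
        simp only [Finset.filter_mem_eq_inter, Finset.univ_inter]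
        rw [add_eq_left.2]
        · refine Finset.sum_congr rfl fun x hx => ?_
          simp [hx]
        · refine Finset.sum_eq_zero fun x hx => ?_
          simp at hx
          simp [hx]
      rw [hgen, hgen] at hpr
      have : eS D A' B' = eS (av f q0) A' B' - eS (av f p) A' B' := by
        simp only [eS, hD, Finset.sum_sub_distrib]
      rw [this, hpr]
      congr 1
      rw [eS]
      have : ∀ x ∈ A', ∀ y ∈ B', av f p x y = dS f (cl p u) (cl p v) := by
        intro x hx y hy
        rw [av, cl_congr p ((mem_cl p u x).1 (hA hx)), cl_congr p ((mem_cl p v y).1 (hB hy))]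
      rw [Finset.sum_congr rfl fun x hx => Finset.sum_congr rfl fun y hy => this x hx y hy]
      simp; ring
    rw [← key] at hlt
    have hcs := rect_cs D A' B' (cl p u) (cl p v) hA hB
    have hpos : 0 < ((cl p u).card : ℝ) * ((cl p v).card : ℝ) :=
      mul_pos (cl_card_pos p u) (cl_card_pos p v)
    set N := ((cl p u).card : ℝ) * ((cl p v).card : ℝ)
    have h2 : (η * N) ^ 2 ≤ eS D A' B' ^ 2 := by
      rw [← sq_abs (eS D A' B')]
      exact pow_le_pow_left₀ (by positivity) hlt.le 2
    rw [av, dS, le_div_iff₀ hpos]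
    have h3 : N * (η ^ 2 * N) ≤ N * eS (fun u v => D u v ^ 2) (cl p u) (cl p v) := by nlinarith
    exact le_of_mul_le_mul_left h3 hpos

lemma szem_aux {η : ℝ} (hη : 0 < η) (t : ℕ) : ∀ k : ℕ, ∃ K : ℕ, ∀ (n : ℕ) (f : Fin n → Fin n → ℝ)
    (p : Fin n → Fin k), ∃ q : Fin n → Fin K, Refines q p ∧
      (irr f η q ≤ η * (n : ℝ) ^ 2 ∨ en f p + t * η ^ 3 * (n : ℝ) ^ 2 ≤ en f q) := by
  induction t with
  | zero => exact fun k => ⟨k, fun n f p => ⟨p, fun _ _ h => h, Or.inr (by simp)⟩⟩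
  | succ t ih =>
    intro k
    obtain ⟨K, hK⟩ := ih (stepK k)
    refine ⟨max k K, fun n f p => ?_⟩
    by_cases hreg : irr f η p ≤ η * (n : ℝ) ^ 2
    · have hi : Function.Injective (Fin.castLE (le_max_left k K)) := Fin.castLE_injective _
      refine ⟨fun u => Fin.castLE (le_max_left k K) (p u), fun u v h => hi h, Or.inl ?_⟩
      rwa [irr_comp f η p _ hi]
    · obtain ⟨p1, hp1, hinc⟩ := increment f hη p
      obtain ⟨q, hq, hh⟩ := hK n f p1
      have hi : Function.Injective (Fin.castLE (le_max_right k K)) := Fin.castLE_injective _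
      refine ⟨fun u => Fin.castLE (le_max_right k K) (q u),
        fun u v h => hp1 _ _ (hq _ _ (hi h)), ?_⟩
      rw [irr_comp f η q _ hi, en_comp f q _ hi]
      refine hh.imp id fun h => ?_
      push Not at hreg
      have : η ^ 2 * (η * (n : ℝ) ^ 2) ≤ η ^ 2 * irr f η p :=
        mul_le_mul_of_nonneg_left hreg.le (by positivity)
      push_cast
      nlinarith

lemma irr_zero {κ : Type*} (f : Fin 0 → Fin 0 → ℝ) (η : ℝ) (p : Fin 0 → κ) : irr f η p = 0 := by
  simp [irr]

lemma szem (η : ℝ) (hη : 0 < η) (k : ℕ) : ∃ K : ℕ, ∀ (n : ℕ) (f : Fin n → Fin n → ℝ),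
    (∀ u v, 0 ≤ f u v) → (∀ u v, f u v ≤ 1) → ∀ (p : Fin n → Fin k),
    ∃ q : Fin n → Fin K, Refines q p ∧ irr f η q ≤ η * (n : ℝ) ^ 2 := by
  obtain ⟨t, ht⟩ := exists_nat_gt (1 / η ^ 3)
  obtain ⟨K, hK⟩ := szem_aux hη t k
  refine ⟨K, fun n f h0 h1 p => ?_⟩
  obtain ⟨q, hq, h⟩ := hK n f p
  refine ⟨q, hq, ?_⟩
  rcases h with h | h
  · exact h
  · have e1 := en_le h0 h1 q
    have e2 := en_nonneg f p
    have ht' : 1 < t * η ^ 3 := by rwa [div_lt_iff₀ (by positivity)] at ht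
    rcases Nat.eq_zero_or_pos n with rfl | hn
    · rw [irr_zero]; simp
    · have : 0 < (n : ℝ) ^ 2 := by positivity
      nlinarith

lemma strong (η : ℕ → ℝ) (hη : ∀ k, 0 < η k) (δ : ℝ) (hδ : 0 < δ) (k0 : ℕ) :
    ∃ (T : ℕ) (κ : ℕ → ℕ), ∀ (n : ℕ) (f : Fin n → Fin n → ℝ),
    (∀ u v, 0 ≤ f u v) → (∀ u v, f u v ≤ 1) → 0 < n → ∀ (p0 : Fin n → Fin k0),
    ∃ i < T, ∃ (p : Fin n → Fin (κ i)) (q : Fin n → Fin (κ (i + 1))),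
      Refines p p0 ∧ Refines q p ∧ irr f (η (κ i)) q ≤ η (κ i) * (n : ℝ) ^ 2 ∧
      en f q - en f p ≤ δ * (n : ℝ) ^ 2 := by
  choose K hK using fun k => szem (η k) (hη k) k
  let κ : ℕ → ℕ := fun i => Nat.rec k0 (fun _ k => K k) i
  obtain ⟨T, hT⟩ := exists_nat_gt (1 / δ)
  refine ⟨T, κ, fun n f h0 h1 hn p0 => ?_⟩
  have main : ∀ t : ℕ, (∃ i < t, ∃ (p : Fin n → Fin (κ i)) (q : Fin n → Fin (κ (i + 1))),
      Refines p p0 ∧ Refines q p ∧ irr f (η (κ i)) q ≤ η (κ i) * (n : ℝ) ^ 2 ∧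
      en f q - en f p ≤ δ * (n : ℝ) ^ 2) ∨
      ∃ p : Fin n → Fin (κ t), Refines p p0 ∧ t * δ * (n : ℝ) ^ 2 ≤ en f p := by
    intro t
    induction t with
    | zero => exact Or.inr ⟨p0, fun _ _ h => h, by simpa using en_nonneg f p0⟩
    | succ t ih =>
      rcases ih with ⟨i, hi, h⟩ | ⟨p, hp, he⟩
      · exact Or.inl ⟨i, by omega, h⟩
      · obtain ⟨q, hq, hirr⟩ := hK (κ t) n f h0 h1 p
        by_cases hle : en f q - en f p ≤ δ * (n : ℝ) ^ 2
        · exact Or.inl ⟨t, by omega, p, q, hp, hq, hirr, hle⟩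
        · refine Or.inr ⟨q, fun u v h => hp _ _ (hq _ _ h), ?_⟩
          push Not at hle
          push_cast
          nlinarith
  rcases main T with h | ⟨p, _, he⟩
  · exact h
  · exfalso
    have e1 := en_le h0 h1 p
    have hT' : 1 < T * δ := by rwa [div_lt_iff₀ hδ] at hT
    have : 0 < (n : ℝ) ^ 2 := by positivity
    nlinarith

lemma pi_update {n : ℕ} {ι : Type*} [Fintype ι] [DecidableEq ι] (X : ι → Finset (Fin n)) (p : ι)
    (F : (ι → Fin n) → ℝ) :
    ∑ x ∈ Fintype.piFinset X, ∑ s ∈ X p, F (Function.update x p s) =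
      ((X p).card : ℝ) * ∑ x ∈ Fintype.piFinset X, F x := by
  have h : ((X p).card : ℝ) * ∑ x ∈ Fintype.piFinset X, F x =
      ∑ x ∈ Fintype.piFinset X, ∑ s ∈ X p, F x := by
    simp [Finset.mul_sum]
  rw [h, ← Finset.sum_product', ← Finset.sum_product']
  have hm : ∀ a ∈ Fintype.piFinset X ×ˢ X p,
      ((Function.update a.1 p a.2, a.1 p) : (ι → Fin n) × Fin n) ∈ Fintype.piFinset X ×ˢ X p := by
    rintro ⟨x, s⟩ h
    simp only [Finset.mem_product, Fintype.mem_piFinset] at h ⊢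
    refine ⟨fun i => ?_, h.1 p⟩
    by_cases hi : i = p
    · subst hi; simpa using h.2
    · simpa [hi] using h.1 i
  refine Finset.sum_nbij' (fun a => (Function.update a.1 p a.2, a.1 p))
    (fun a => (Function.update a.1 p a.2, a.1 p)) hm hm ?_ ?_ ?_
  · rintro ⟨x, s⟩ _; simp
  · rintro ⟨x, s⟩ _; simp
  · rintro ⟨x, s⟩ _; rfl

lemma pi_update2 {n : ℕ} {ι : Type*} [Fintype ι] [DecidableEq ι] (X : ι → Finset (Fin n)) (p q : ι)
    (F : (ι → Fin n) → ℝ) :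
    ∑ x ∈ Fintype.piFinset X, ∑ s ∈ X p, ∑ t ∈ X q, F (Function.update (Function.update x p s) q t) =
      ((X p).card : ℝ) * (X q).card * ∑ x ∈ Fintype.piFinset X, F x := by
  rw [pi_update X p (fun x => ∑ t ∈ X q, F (Function.update x q t)), pi_update X q F, mul_assoc]

lemma pi_pair {n : ℕ} {ι : Type*} [Fintype ι] [DecidableEq ι] (X : ι → Finset (Fin n)) {p q : ι}
    (hpq : p ≠ q) (φ : Fin n → Fin n → ℝ) :
    ((X p).card : ℝ) * (X q).card * ∑ x ∈ Fintype.piFinset X, φ (x p) (x q) =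
      ((Fintype.piFinset X).card : ℝ) * ∑ s ∈ X p, ∑ t ∈ X q, φ s t := by
  rw [← pi_update2 X p q (fun x => φ (x p) (x q))]
  simp [hpq]

lemma pi_single' {n : ℕ} {ι : Type*} [Fintype ι] [DecidableEq ι] (X : ι → Finset (Fin n)) (p : ι)
    (φ : Fin n → ℝ) :
    ((X p).card : ℝ) * ∑ x ∈ Fintype.piFinset X, φ (x p) =
      ((Fintype.piFinset X).card : ℝ) * ∑ s ∈ X p, φ s := by
  rw [← pi_update X p (fun x => φ (x p))]
  simp

/-- The cell of colour `i`. -/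
noncomputable def cell {n k : ℕ} (p : Fin n → Fin k) (i : Fin k) : Finset (Fin n) :=
  univ.filter (fun v => p v = i)

lemma cl_eq_cell {n k : ℕ} (p : Fin n → Fin k) (u : Fin n) : cl p u = cell p (p u) := by
  ext w; simp [mem_cl, cell]

lemma cl_eq_cell' {n k : ℕ} (p : Fin n → Fin k) (u : Fin n) (i : Fin k) (h : u ∈ cell p i) :
    cl p u = cell p i := by
  have : p u = i := by simpa [cell] using h
  rw [cl_eq_cell, this]

lemma cell_sum {n k : ℕ} (p : Fin n → Fin k) (g : Fin n → ℝ) :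
    ∑ i, ∑ s ∈ cell p i, g s = ∑ s, g s := Finset.sum_fiberwise _ _ _

lemma rect_sum {n k : ℕ} (p : Fin n → Fin k) (g : Fin n → Fin n → ℝ) :
    ∑ i, ∑ j, ∑ s ∈ cell p i, ∑ t ∈ cell p j, g s t = ∑ s, ∑ t, g s t := by
  rw [← cell_sum p]
  refine Finset.sum_congr rfl fun i _ => ?_
  rw [Finset.sum_comm]
  refine Finset.sum_congr rfl fun s _ => ?_
  rw [cell_sum]

/-- Significant colours. -/
noncomputable def sig {n k : ℕ} (γ : ℝ) (p : Fin n → Fin k) : Finset (Fin k) :=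
  univ.filter (fun i => γ * n ≤ k * ((cell p i).card : ℝ))

lemma select {n k k' : ℕ} (hn : 0 < n) (f : Fin n → Fin n → ℝ)
    (p : Fin n → Fin k) (q : Fin n → Fin k') (hqp : Refines q p) {η γ δ β : ℝ} (hγ : 0 < γ)
    (hδ : 0 < δ) (hirr : irr f η q ≤ η * (n : ℝ) ^ 2)
    (hen : en f q - en f p ≤ δ * (n : ℝ) ^ 2) (hηγ : 4 * η * (k : ℝ) ^ 2 ≤ γ ^ 2) (hβ0 : 0 < β)
    (hβ : 4 * k * k' * β ≤ γ) :
    ∃ y : Fin k → Fin n, (∀ i ∈ sig γ p, p (y i) = i) ∧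
      (∀ i ∈ sig γ p, β * n ≤ ((cl q (y i)).card : ℝ)) ∧
      (∀ i ∈ sig γ p, ∀ j ∈ sig γ p, i ≠ j → RegP f η (cl q (y i)) (cl q (y j))) ∧
      ∑ u, ∑ v, (if p u ∈ sig γ p ∧ p v ∈ sig γ p ∧ p u ≠ p v then
        (av f q (y (p u)) (y (p v)) - av f p u v) ^ 2 else 0) ≤ 4 * δ * (n : ℝ) ^ 2 := by
  have hnR : (0 : ℝ) < n := by exact_mod_cast hn
  have hk : (0 : ℝ) < k := by exact_mod_cast Fin.pos (p ⟨0, hn⟩)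
  set I := sig γ p with hI
  let U : Fin k → Finset (Fin n) := fun i => if i ∈ I then cell p i else univ
  have hUI : ∀ i ∈ I, U i = cell p i := fun i hi => by simp [U, hi]
  have hIc : ∀ i ∈ I, γ * n / k ≤ ((U i).card : ℝ) := by
    intro i hi
    rw [hUI i hi, div_le_iff₀ hk]
    have : γ * n ≤ k * ((cell p i).card : ℝ) := by simpa [hI, sig] using hi
    linarith
  have hUne : ∀ i, (U i).Nonempty := by
    intro i
    by_cases hi : i ∈ I
    · have h1 : (0 : ℝ) < (U i).card := lt_of_lt_of_le (by positivity) (hIc i hi)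
      exact Finset.card_pos.1 (by exact_mod_cast h1)
    · simp only [U, hi, if_false]; exact ⟨⟨0, hn⟩, by simp⟩
  set Ω := Fintype.piFinset U with hΩ
  have hΩne : Ω.Nonempty := Fintype.piFinset_nonempty.2 hUne
  set N : ℝ := (Ω.card : ℝ) with hN
  have hNpos : 0 < N := by rw [hN]; exact_mod_cast Finset.card_pos.2 hΩne
  let c : Fin k → Fin k → ℝ := fun i j => if i ∈ I ∧ j ∈ I ∧ i ≠ j then 1 else 0
  have hc01 : ∀ i j, 0 ≤ c i j ∧ c i j ≤ 1 := by
    intro i j; simp only [c]; split_ifs <;> norm_num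
  let Φ1 : (Fin k → Fin n) → ℝ := fun y => ∑ i, ∑ j, c i j *
    ((U i).card * (U j).card * (av f q (y i) (y j) - dS f (cell p i) (cell p j)) ^ 2)
  let Φ2 : (Fin k → Fin n) → ℝ := fun y => ∑ i, ∑ j, c i j *
    (if RegP f η (cl q (y i)) (cl q (y j)) then (0 : ℝ) else 1)
  let Φ3 : (Fin k → Fin n) → ℝ := fun y => ∑ i ∈ I,
    (if β * n ≤ ((cl q (y i)).card : ℝ) then (0 : ℝ) else 1)
  -- first average
  have A1 : ∑ y ∈ Ω, Φ1 y ≤ N * (δ * (n : ℝ) ^ 2) := by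
    have e1 : ∑ y ∈ Ω, Φ1 y = ∑ i, ∑ j, c i j * (N * ∑ s ∈ cell p i, ∑ t ∈ cell p j,
        (av f q s t - av f p s t) ^ 2) := by
      simp only [Φ1]
      rw [Finset.sum_comm]
      refine Finset.sum_congr rfl fun i _ => ?_
      rw [Finset.sum_comm]
      refine Finset.sum_congr rfl fun j _ => ?_
      rw [← Finset.mul_sum]
      by_cases hij : i ∈ I ∧ j ∈ I ∧ i ≠ j
      · rw [← Finset.mul_sum]
        rw [pi_pair U hij.2.2 (fun s t => (av f q s t - dS f (cell p i) (cell p j)) ^ 2),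
          hUI i hij.1, hUI j hij.2.1]
        congr 2
        refine Finset.sum_congr rfl fun s hs => Finset.sum_congr rfl fun t ht => ?_
        rw [av.eq_1 f p, cl_eq_cell' p s i hs, cl_eq_cell' p t j ht]
      · simp [c, hij]
    rw [e1]
    calc _ ≤ ∑ i, ∑ j, (N * ∑ s ∈ cell p i, ∑ t ∈ cell p j, (av f q s t - av f p s t) ^ 2) := by
          refine Finset.sum_le_sum fun i _ => Finset.sum_le_sum fun j _ => ?_
          refine mul_le_of_le_one_left ?_ (hc01 i j).2
          exact mul_nonneg hNpos.le
            (Finset.sum_nonneg fun _ _ => Finset.sum_nonneg fun _ _ => sq_nonneg _)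
      _ = N * (en f q - en f p) := by
          rw [← pyth f p q hqp, ← rect_sum p]
          simp only [Finset.mul_sum]
      _ ≤ _ := mul_le_mul_of_nonneg_left hen hNpos.le
  have A2 : ∑ y ∈ Ω, Φ2 y ≤ N / 4 := by
    have e1 : (γ * n / k) ^ 2 * ∑ y ∈ Ω, Φ2 y ≤ N * irr f η q := by
      have : (γ * n / k) ^ 2 * ∑ y ∈ Ω, Φ2 y = ∑ i, ∑ j, (γ * n / k) ^ 2 * (c i j *
          ∑ y ∈ Ω, (if RegP f η (cl q (y i)) (cl q (y j)) then (0 : ℝ) else 1)) := by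
        simp only [Φ2]
        rw [Finset.sum_comm, Finset.mul_sum]
        refine Finset.sum_congr rfl fun i _ => ?_
        rw [Finset.sum_comm, Finset.mul_sum]
        refine Finset.sum_congr rfl fun j _ => ?_
        rw [← Finset.mul_sum]
      rw [this, irr, ← rect_sum p, Finset.mul_sum]
      refine Finset.sum_le_sum fun i _ => ?_
      rw [Finset.mul_sum]
      refine Finset.sum_le_sum fun j _ => ?_
      have hnn : 0 ≤ ∑ s ∈ cell p i, ∑ t ∈ cell p j,
          (if RegP f η (cl q s) (cl q t) then (0 : ℝ) else 1) :=
        Finset.sum_nonneg fun _ _ => Finset.sum_nonneg fun _ _ => by split_ifs <;> norm_num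
      have hnn2 : 0 ≤ ∑ y ∈ Ω, (if RegP f η (cl q (y i)) (cl q (y j)) then (0 : ℝ) else 1) :=
        Finset.sum_nonneg fun _ _ => by split_ifs <;> norm_num
      by_cases hij : i ∈ I ∧ j ∈ I ∧ i ≠ j
      · have hpp := pi_pair U hij.2.2 (fun s t => if RegP f η (cl q s) (cl q t) then (0 : ℝ) else 1)
        rw [hUI i hij.1, hUI j hij.2.1] at hpp
        rw [← hpp]
        have hc1 : c i j = 1 := if_pos hij
        rw [hc1, one_mul]
        have g1 := hIc i hij.1
        have g2 := hIc j hij.2.1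
        rw [hUI i hij.1] at g1
        rw [hUI j hij.2.1] at g2
        refine mul_le_mul_of_nonneg_right ?_ hnn2
        rw [sq]
        exact mul_le_mul g1 g2 (by positivity) (by positivity)
      · simp only [c, hij, if_false, zero_mul, mul_zero]
        positivity
    have e2 : N * irr f η q ≤ N * (η * (n : ℝ) ^ 2) := mul_le_mul_of_nonneg_left hirr hNpos.le
    have e3 : 0 < (γ * n / k) ^ 2 := by positivity
    have e4 : N * (η * (n : ℝ) ^ 2) ≤ (γ * n / k) ^ 2 * (N / 4) := by
      rw [div_pow, div_mul_eq_mul_div, le_div_iff₀ (by positivity)]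
      have : N * (n : ℝ) ^ 2 * (4 * η * (k : ℝ) ^ 2) ≤ N * (n : ℝ) ^ 2 * γ ^ 2 :=
        mul_le_mul_of_nonneg_left hηγ (by positivity)
      linarith
    exact le_of_mul_le_mul_left (e1.trans (e2.trans e4)) e3
  have A3 : ∑ y ∈ Ω, Φ3 y ≤ N / 4 := by
    have e1 : (γ * n / k) * ∑ y ∈ Ω, Φ3 y ≤
        N * ∑ s, (if β * n ≤ ((cl q s).card : ℝ) then (0 : ℝ) else 1) := by
      simp only [Φ3]
      rw [Finset.sum_comm, Finset.mul_sum, ← cell_sum p, Finset.mul_sum]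
      have : ∀ i, 0 ≤ N * ∑ s ∈ cell p i, (if β * n ≤ ((cl q s).card : ℝ) then (0 : ℝ) else 1) :=
        fun i => mul_nonneg hNpos.le (Finset.sum_nonneg fun _ _ => by split_ifs <;> norm_num)
      refine le_trans (Finset.sum_le_sum fun i hi => ?_)
        (Finset.sum_le_sum_of_subset_of_nonneg (Finset.subset_univ I) fun i _ _ => this i)
      have hpp := pi_single' U i (fun s => if β * n ≤ ((cl q s).card : ℝ) then (0 : ℝ) else 1)
      have hg := hIc i hi
      rw [hUI i hi] at hpp hg
      rw [← hpp]
      refine mul_le_mul_of_nonneg_right hg ?_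
      exact Finset.sum_nonneg fun _ _ => by split_ifs <;> norm_num
    have e2 : ∑ s, (if β * n ≤ ((cl q s).card : ℝ) then (0 : ℝ) else 1) ≤ k' * (β * n) := by
      rw [← cell_sum q]
      calc _ ≤ ∑ i : Fin k', β * (n : ℝ) := by
            refine Finset.sum_le_sum fun i _ => ?_
            by_cases h : β * n ≤ ((cell q i).card : ℝ)
            · rw [Finset.sum_eq_zero]
              · positivity
              · intro s hs; rw [cl_eq_cell' q s i hs, if_pos h]
            · rw [Finset.sum_congr rfl (g := fun _ => (1 : ℝ))]
              · simp; push Not at h; exact h.le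
              · intro s hs; rw [cl_eq_cell' q s i hs, if_neg h]
        _ = _ := by simp
    have e3 : 0 < γ * n / k := by positivity
    have e4 : N * (k' * (β * n)) ≤ (γ * n / k) * (N / 4) := by
      rw [div_mul_eq_mul_div, le_div_iff₀ hk]
      have : N * n * (4 * k * k' * β) ≤ N * n * γ :=
        mul_le_mul_of_nonneg_left hβ (by positivity)
      linarith
    exact le_of_mul_le_mul_left
      (e1.trans ((mul_le_mul_of_nonneg_left e2 hNpos.le).trans e4)) e3
  have hΦ1 : ∀ y, 0 ≤ Φ1 y := fun y => Finset.sum_nonneg fun i _ => Finset.sum_nonneg fun j _ =>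
    mul_nonneg (hc01 i j).1 (by positivity)
  have hPhiTwo : ∀ (y : Fin k → Fin n) i j, 0 ≤ c i j * (if RegP f η (cl q (y i)) (cl q (y j)) then (0 : ℝ) else 1) :=
    fun y i j => mul_nonneg (hc01 i j).1 (by split_ifs <;> norm_num)
  have hΦ2 : ∀ y, 0 ≤ Φ2 y := fun y => Finset.sum_nonneg fun i _ => Finset.sum_nonneg fun j _ =>
    hPhiTwo y i j
  have hPhiThree : ∀ (y : Fin k → Fin n) i, 0 ≤ (if β * n ≤ ((cl q (y i)).card : ℝ) then (0 : ℝ) else 1) :=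
    fun y i => by split_ifs <;> norm_num
  have hΦ3 : ∀ y, 0 ≤ Φ3 y := fun y => Finset.sum_nonneg fun i _ => hPhiThree y i
  have hM : 0 < 4 * δ * (n : ℝ) ^ 2 := by positivity
  obtain ⟨y, hy, hlt⟩ : ∃ y ∈ Ω, Φ1 y / (4 * δ * (n : ℝ) ^ 2) + Φ2 y + Φ3 y < 1 := by
    by_contra hcon
    push Not at hcon
    have h1 : N ≤ ∑ y ∈ Ω, (Φ1 y / (4 * δ * (n : ℝ) ^ 2) + Φ2 y + Φ3 y) := by
      calc N = ∑ y ∈ Ω, (1 : ℝ) := by simp [hN]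
        _ ≤ _ := Finset.sum_le_sum hcon
    rw [Finset.sum_add_distrib, Finset.sum_add_distrib, ← Finset.sum_div] at h1
    have h2 : (∑ y ∈ Ω, Φ1 y) / (4 * δ * (n : ℝ) ^ 2) ≤ N / 4 := by
      rw [div_le_iff₀ hM]; linarith
    linarith
  have hd := div_nonneg (hΦ1 y) hM.le
  have hyU : ∀ i, y i ∈ U i := by simpa [hΩ] using hy
  refine ⟨y, fun i hi => ?_, fun i hi => ?_, fun i hi j hj hij => ?_, ?_⟩
  · have := hyU i
    rw [hUI i hi] at this
    simpa [cell] using this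
  · by_contra h
    have : (1 : ℝ) ≤ Φ3 y := by
      calc (1 : ℝ) = (if β * n ≤ ((cl q (y i)).card : ℝ) then (0 : ℝ) else 1) := by rw [if_neg h]
        _ ≤ _ := Finset.single_le_sum (f := fun i =>
          (if β * n ≤ ((cl q (y i)).card : ℝ) then (0 : ℝ) else 1)) (fun i _ => hPhiThree y i) hi
    linarith [hΦ2 y]
  · by_contra h
    have : (1 : ℝ) ≤ Φ2 y := by
      calc (1 : ℝ) = c i j * (if RegP f η (cl q (y i)) (cl q (y j)) then (0 : ℝ) else 1) := by
            rw [if_neg h]; simp [c, hi, hj, hij]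
        _ ≤ ∑ j, c i j * (if RegP f η (cl q (y i)) (cl q (y j)) then (0 : ℝ) else 1) :=
            Finset.single_le_sum (f := fun j => c i j *
              (if RegP f η (cl q (y i)) (cl q (y j)) then (0 : ℝ) else 1))
              (fun j _ => hPhiTwo y i j) (Finset.mem_univ j)
        _ ≤ _ := Finset.single_le_sum (f := fun i => ∑ j, c i j *
              (if RegP f η (cl q (y i)) (cl q (y j)) then (0 : ℝ) else 1))
              (fun i _ => Finset.sum_nonneg fun j _ => hPhiTwo y i j) (Finset.mem_univ i)
    linarith [hΦ3 y]
  · have e : ∑ u, ∑ v, (if p u ∈ I ∧ p v ∈ I ∧ p u ≠ p v then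
        (av f q (y (p u)) (y (p v)) - av f p u v) ^ 2 else 0) = Φ1 y := by
      rw [← rect_sum p]
      simp only [Φ1]
      refine Finset.sum_congr rfl fun i _ => Finset.sum_congr rfl fun j _ => ?_
      have : ∀ s ∈ cell p i, ∀ t ∈ cell p j, (if p s ∈ I ∧ p t ∈ I ∧ p s ≠ p t then
        (av f q (y (p s)) (y (p t)) - av f p s t) ^ 2 else 0) =
          c i j * (av f q (y i) (y j) - dS f (cell p i) (cell p j)) ^ 2 := by
        intro s hs t ht
        rw [av.eq_1 f p, cl_eq_cell' p s i hs, cl_eq_cell' p t j ht]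
        have hs' : p s = i := by simpa [cell] using hs
        have ht' : p t = j := by simpa [cell] using ht
        rw [hs', ht']
        simp only [c]; split_ifs <;> simp
      rw [Finset.sum_congr rfl fun s hs => Finset.sum_congr rfl fun t ht => this s hs t ht]
      by_cases hij : i ∈ I ∧ j ∈ I ∧ i ≠ j
      · rw [hUI i hij.1, hUI j hij.2.1]; simp; ring
      · simp [c, hij]
    rw [e]
    have : Φ1 y / (4 * δ * (n : ℝ) ^ 2) ≤ 1 := by linarith [hΦ2 y, hΦ3 y]
    rwa [div_le_one hM] at this

/-- Homogeneous tuples. -/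
def Hom' {n h : ℕ} (G : SimpleGraph (Fin n)) (s : Bool) (x : Fin h → Fin n) : Prop :=
  Function.Injective x ∧ ∀ a b, a ≠ b → (G.Adj (x a) (x b) ↔ s = true)

lemma ramsey_aux : ∀ N a b : ℕ, a + b = N → ∃ R : ℕ, ∀ (n : ℕ) (G : SimpleGraph (Fin n))
    (S : Finset (Fin n)), R ≤ S.card →
    (∃ T ⊆ S, T.card = a ∧ ∀ x ∈ T, ∀ y ∈ T, x ≠ y → G.Adj x y) ∨
    (∃ T ⊆ S, T.card = b ∧ ∀ x ∈ T, ∀ y ∈ T, x ≠ y → ¬ G.Adj x y) := by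
  intro N
  induction N with
  | zero =>
    intro a b hab
    exact ⟨0, fun n G S _ => Or.inl ⟨∅, by simp, by simp; omega, by simp⟩⟩
  | succ N ih =>
    intro a b hab
    rcases Nat.eq_zero_or_pos a with rfl | ha
    · exact ⟨0, fun n G S _ => Or.inl ⟨∅, by simp, by simp, by simp⟩⟩
    rcases Nat.eq_zero_or_pos b with rfl | hb
    · exact ⟨0, fun n G S _ => Or.inr ⟨∅, by simp, by simp, by simp⟩⟩
    obtain ⟨R1, h1⟩ := ih (a - 1) b (by omega)
    obtain ⟨R2, h2⟩ := ih a (b - 1) (by omega)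
    refine ⟨R1 + R2 + 1, fun n G S hS => ?_⟩
    obtain ⟨v, hv⟩ : S.Nonempty := Finset.card_pos.1 (by omega)
    have hsplit := Finset.card_filter_add_card_filter_not (s := S.erase v) (fun w => G.Adj v w)
    rw [Finset.card_erase_of_mem hv] at hsplit
    have hcase : R1 ≤ ((S.erase v).filter (fun w => G.Adj v w)).card ∨
        R2 ≤ ((S.erase v).filter (fun w => ¬ G.Adj v w)).card := by omega
    rcases hcase with hc | hc
    · rcases h1 n G _ hc with ⟨T, hT, hTc, hTa⟩ | ⟨T, hT, hTc, hTa⟩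
      · left
        have hvT : ∀ w ∈ T, w ∈ S ∧ w ≠ v ∧ G.Adj v w := fun w hw => by
          have := hT hw; simp at this; tauto
        refine ⟨insert v T, ?_, ?_, ?_⟩
        · intro w hw; rcases Finset.mem_insert.1 hw with rfl | hw
          · exact hv
          · exact (hvT w hw).1
        · rw [Finset.card_insert_of_notMem (fun h => (hvT v h).2.1 rfl)]; omega
        · intro x hx y hy hxy
          rcases Finset.mem_insert.1 hx with rfl | hx1 <;> rcases Finset.mem_insert.1 hy with rfl | hy1
          · exact absurd rfl hxy
          · exact (hvT y hy1).2.2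
          · exact (hvT x hx1).2.2.symm
          · exact hTa x hx1 y hy1 hxy
      · right
        refine ⟨T, fun w hw => ?_, hTc, hTa⟩
        have := hT hw; simp at this; tauto
    · rcases h2 n G _ hc with ⟨T, hT, hTc, hTa⟩ | ⟨T, hT, hTc, hTa⟩
      · left
        refine ⟨T, fun w hw => ?_, hTc, hTa⟩
        have := hT hw; simp at this; tauto
      · right
        have hvT : ∀ w ∈ T, w ∈ S ∧ w ≠ v ∧ ¬ G.Adj v w := fun w hw => by
          have := hT hw; simp at this; tauto
        refine ⟨insert v T, ?_, ?_, ?_⟩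
        · intro w hw; rcases Finset.mem_insert.1 hw with rfl | hw
          · exact hv
          · exact (hvT w hw).1
        · rw [Finset.card_insert_of_notMem (fun h => (hvT v h).2.1 rfl)]; omega
        · intro x hx y hy hxy
          rcases Finset.mem_insert.1 hx with rfl | hx1 <;> rcases Finset.mem_insert.1 hy with rfl | hy1
          · exact absurd rfl hxy
          · exact (hvT y hy1).2.2
          · exact fun h => (hvT x hx1).2.2 h.symm
          · exact hTa x hx1 y hy1 hxy

lemma ramsey_tuple (h : ℕ) : ∃ R : ℕ, ∀ (n : ℕ) (G : SimpleGraph (Fin n))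
    (S : Finset (Fin n)), R ≤ S.card → ∃ (s : Bool) (x : Fin h → Fin n), (∀ a, x a ∈ S) ∧ Hom' G s x := by
  obtain ⟨R, hR⟩ := ramsey_aux (h + h) h h rfl
  refine ⟨R, fun n G S hS => ?_⟩
  rcases hR n G S hS with ⟨T, hT, hTc, hTa⟩ | ⟨T, hT, hTc, hTa⟩
  · refine ⟨true, fun a => T.orderEmbOfFin hTc a, fun a => hT (by simp), ?_, ?_⟩
    · exact (T.orderEmbOfFin hTc).injective
    · intro a b hab
      simp only [iff_true]
      exact hTa _ (by simp) _ (by simp) (fun h => hab ((T.orderEmbOfFin hTc).injective h))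
  · refine ⟨false, fun a => T.orderEmbOfFin hTc a, fun a => hT (by simp), ?_, ?_⟩
    · exact (T.orderEmbOfFin hTc).injective
    · intro a b hab
      simp only [Bool.false_eq_true, iff_false]
      exact hTa _ (by simp) _ (by simp) (fun h => hab ((T.orderEmbOfFin hTc).injective h))

/-- Few tuples are not injective. -/
lemma noninj {n : ℕ} {ι : Type*} [Fintype ι] [DecidableEq ι] (X : Finset (Fin n)) :
    (X.card : ℝ) * ((Fintype.piFinset (fun _ : ι => X)).filter
      (fun x => ¬ Function.Injective x)).card ≤
      (Fintype.card ι : ℝ) ^ 2 * ((Fintype.piFinset (fun _ : ι => X)).card : ℝ) := by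
  rcases X.eq_empty_or_nonempty with rfl | hX
  · simp; positivity
  have hXp : (0 : ℝ) < X.card := by exact_mod_cast Finset.card_pos.2 hX
  set Ω := Fintype.piFinset (fun _ : ι => X) with hΩ
  have h1 : ((Ω.filter (fun x => ¬ Function.Injective x)).card : ℝ) ≤
      ∑ p : ι, ∑ q : ι, if p ≠ q then ∑ x ∈ Ω, (if x p = x q then (1 : ℝ) else 0) else 0 := by
    have : ∑ p : ι, ∑ q : ι, (if p ≠ q then ∑ x ∈ Ω, (if x p = x q then (1 : ℝ) else 0) else 0) =
        ∑ x ∈ Ω, ∑ p : ι, ∑ q : ι, if p ≠ q ∧ x p = x q then (1 : ℝ) else 0 := by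
      symm
      rw [Finset.sum_comm]
      refine Finset.sum_congr rfl fun p _ => ?_
      rw [Finset.sum_comm]
      refine Finset.sum_congr rfl fun q _ => ?_
      by_cases h : p ≠ q <;> simp [h]
    rw [this, Finset.card_filter]
    push_cast
    refine Finset.sum_le_sum fun x _ => ?_
    have hnn : ∀ p q : ι, (0 : ℝ) ≤ if p ≠ q ∧ x p = x q then (1 : ℝ) else 0 :=
      fun p q => by split_ifs <;> norm_num
    split_ifs with h
    · exact Finset.sum_nonneg fun p _ => Finset.sum_nonneg fun q _ => hnn p q
    · simp only [Function.Injective, not_forall] at h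
      obtain ⟨p, q, hpq, hne⟩ := h
      calc (1 : ℝ) = if p ≠ q ∧ x p = x q then (1 : ℝ) else 0 := by rw [if_pos ⟨hne, hpq⟩]
        _ ≤ ∑ q : ι, if p ≠ q ∧ x p = x q then (1 : ℝ) else 0 :=
          Finset.single_le_sum (f := fun q => if p ≠ q ∧ x p = x q then (1 : ℝ) else 0)
            (fun q _ => hnn p q) (Finset.mem_univ q)
        _ ≤ _ := Finset.single_le_sum
          (f := fun p => ∑ q : ι, if p ≠ q ∧ x p = x q then (1 : ℝ) else 0)
            (fun p _ => Finset.sum_nonneg fun q _ => hnn p q) (Finset.mem_univ p)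
  have h2 : ∀ p q : ι, p ≠ q → (X.card : ℝ) * ∑ x ∈ Ω, (if x p = x q then (1 : ℝ) else 0) = Ω.card := by
    intro p q hpq
    have := pi_pair (fun _ : ι => X) hpq (fun s t => if s = t then (1 : ℝ) else 0)
    simp only [Finset.sum_ite_eq] at this
    have h3 : ∑ s ∈ X, (if s ∈ X then (1 : ℝ) else 0) = X.card := by
      rw [Finset.sum_congr rfl (g := fun _ => (1 : ℝ)) (fun s hs => by simp [hs])]; simp
    rw [h3, ← hΩ] at this
    have h4 : (X.card : ℝ) * ((X.card : ℝ) * ∑ x ∈ Ω, (if x p = x q then (1 : ℝ) else 0)) =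
      X.card * Ω.card := by linarith
    exact mul_left_cancel₀ hXp.ne' h4
  calc _ ≤ (X.card : ℝ) * ∑ p : ι, ∑ q : ι,
        (if p ≠ q then ∑ x ∈ Ω, (if x p = x q then (1 : ℝ) else 0) else 0) :=
        mul_le_mul_of_nonneg_left h1 hXp.le
    _ ≤ ∑ p : ι, ∑ q : ι, (Ω.card : ℝ) := by
        rw [Finset.mul_sum]
        refine Finset.sum_le_sum fun p _ => ?_
        rw [Finset.mul_sum]
        refine Finset.sum_le_sum fun q _ => ?_
        by_cases h : p ≠ q
        · rw [if_pos h, h2 p q h]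
        · rw [if_neg h]; simp
    _ = _ := by simp; ring

lemma inj_half {n : ℕ} {ι : Type*} [Fintype ι] [DecidableEq ι] (X : Finset (Fin n))
    (hpos : 0 < X.card) (hX : 2 * (Fintype.card ι) ^ 2 ≤ X.card) :
    ((Fintype.piFinset (fun _ : ι => X)).card : ℝ) ≤
      2 * (((Fintype.piFinset (fun _ : ι => X)).filter (fun x => Function.Injective x)).card : ℝ) := by
  have h1 := noninj (ι := ι) X
  have h2 := Finset.card_filter_add_card_filter_not (s := Fintype.piFinset (fun _ : ι => X))
    (fun x => Function.Injective x)
  set Ω := Fintype.piFinset (fun _ : ι => X)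
  have h3 : ((Ω.filter (fun x => Function.Injective x)).card : ℝ) +
    ((Ω.filter (fun x => ¬ Function.Injective x)).card : ℝ) = Ω.card := by exact_mod_cast h2
  have hXp : (0 : ℝ) < X.card := by exact_mod_cast hpos
  have hX' : 2 * (Fintype.card ι : ℝ) ^ 2 ≤ X.card := by exact_mod_cast hX
  have h4 : (X.card : ℝ) * (2 * (Ω.filter (fun x => ¬ Function.Injective x)).card) ≤
      X.card * Ω.card := by
    calc _ ≤ 2 * (Fintype.card ι : ℝ) ^ 2 * Ω.card := by linarith
      _ ≤ _ := mul_le_mul_of_nonneg_right hX' (by positivity)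
  have := le_of_mul_le_mul_left h4 hXp
  linarith

/-- Marginals of the uniform distribution on tuples. -/
lemma marg {n : ℕ} {ι ι' : Type*} [Fintype ι] [DecidableEq ι] [Fintype ι'] [DecidableEq ι']
    (X : Finset (Fin n)) (e : ι' → ι) (he : Function.Injective e) (Q : (ι' → Fin n) → Prop) :
    (Fintype.piFinset (fun _ : ι' => X)).card *
      ((Fintype.piFinset (fun _ : ι => X)).filter (fun x => Q (x ∘ e))).card =
    (Fintype.piFinset (fun _ : ι => X)).card *
      ((Fintype.piFinset (fun _ : ι' => X)).filter Q).card := by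
  rw [mul_comm, ← Finset.card_product, ← Finset.card_product]
  refine Finset.card_nbij' (fun a => (Function.extend e a.2 a.1, a.1 ∘ e))
    (fun a => (Function.extend e a.2 a.1, a.1 ∘ e)) ?_ ?_ ?_ ?_
  · rintro ⟨x, z⟩ h
    simp only [Finset.coe_product, Set.mem_prod, Finset.mem_coe, Finset.mem_filter,
      Fintype.mem_piFinset] at h ⊢
    refine ⟨fun i => ?_, fun a => h.1.1 _, h.1.2⟩
    by_cases hi : ∃ a, e a = i
    · obtain ⟨a, rfl⟩ := hi; rw [he.extend_apply]; exact h.2 a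
    · rw [Function.extend_apply' _ _ _ hi]; exact h.1.1 i
  · rintro ⟨x, z⟩ h
    simp only [Finset.coe_product, Set.mem_prod, Finset.mem_coe, Finset.mem_filter,
      Fintype.mem_piFinset] at h ⊢
    rw [Function.extend_comp he]
    refine ⟨⟨fun i => ?_, h.2.2⟩, fun a => h.1 _⟩
    by_cases hi : ∃ a, e a = i
    · obtain ⟨a, rfl⟩ := hi; rw [he.extend_apply]; exact h.2.1 a
    · rw [Function.extend_apply' _ _ _ hi]; exact h.1 i
  all_goals
    rintro ⟨x, z⟩ _
    simp only [Prod.mk.injEq]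
    refine ⟨?_, Function.extend_comp he _ _⟩
    funext i
    by_cases hi : ∃ a, e a = i
    · obtain ⟨a, rfl⟩ := hi; rw [he.extend_apply]; rfl
    · rw [Function.extend_apply' _ _ _ hi, Function.extend_apply' _ _ _ hi]

lemma supersat (h : ℕ) : ∃ (ζ : ℝ) (N : ℕ), 0 < ζ ∧ ζ ≤ 1 ∧ ∀ (n : ℕ) (G : SimpleGraph (Fin n))
    (X : Finset (Fin n)), N ≤ X.card → ∃ s : Bool,
      ζ * ((Fintype.piFinset (fun _ : Fin h => X)).card : ℝ) ≤
        (((Fintype.piFinset (fun _ : Fin h => X)).filter (Hom' G s)).card : ℝ) := by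
  obtain ⟨R, hR⟩ := ramsey_tuple h
  have hC : (0 : ℝ) < 4 * ((R : ℝ) ^ h + 1) := by positivity
  refine ⟨1 / (4 * ((R : ℝ) ^ h + 1)), 2 * R ^ 2 + 1, by positivity, ?_, fun n G X hX => ?_⟩
  · rw [div_le_one hC]
    have : (0 : ℝ) ≤ (R : ℝ) ^ h := by positivity
    linarith
  by_contra hcon
  push Not at hcon
  have hhalf := inj_half (ι := Fin R) X (by omega) (by simp; omega)
  set Ω := Fintype.piFinset (fun _ : Fin R => X) with hΩ
  set Ωh := Fintype.piFinset (fun _ : Fin h => X) with hΩh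
  have hXne : X.Nonempty := Finset.card_pos.1 (by omega)
  have hΩpos : (0 : ℝ) < Ω.card := by
    exact_mod_cast Finset.card_pos.2 (Fintype.piFinset_nonempty.2 fun _ => hXne)
  have hΩhpos : (0 : ℝ) < Ωh.card := by
    exact_mod_cast Finset.card_pos.2 (Fintype.piFinset_nonempty.2 fun _ => hXne)
  have hbd : ∀ (s : Bool) (e : Fin h → Fin R),
      ((Ω.filter (fun x => Function.Injective e ∧ Hom' G s (x ∘ e))).card : ℝ) ≤
        1 / (4 * ((R : ℝ) ^ h + 1)) * Ω.card := by
    intro s e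
    by_cases he : Function.Injective e
    · have hm := marg X e he (Hom' G s)
      rw [← hΩ, ← hΩh] at hm
      have hm' : (Ωh.card : ℝ) * ((Ω.filter (fun x => Hom' G s (x ∘ e))).card : ℝ) =
        Ω.card * ((Ωh.filter (Hom' G s)).card : ℝ) := by exact_mod_cast hm
      simp only [he, true_and]
      have h1 := mul_le_mul_of_nonneg_left (hcon s).le hΩpos.le
      rw [← hm'] at h1
      refine le_of_mul_le_mul_left ?_ hΩhpos
      linarith
    · simp only [he, false_and, Finset.filter_false, Finset.card_empty]
      simp only [Nat.cast_zero]
      positivity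
  have hcover : Ω.filter (fun x => Function.Injective x) ⊆
      (univ : Finset (Bool × (Fin h → Fin R))).biUnion
        (fun se => Ω.filter (fun x => Function.Injective se.2 ∧ Hom' G se.1 (x ∘ se.2))) := by
    intro x hx
    obtain ⟨hx, hinj⟩ := Finset.mem_filter.1 hx
    obtain ⟨s, z, hz, hhom⟩ := hR n G (univ.image x) (by
      rw [Finset.card_image_of_injective _ hinj]; simp)
    have : ∀ a, ∃ i, x i = z a := fun a => by simpa using hz a
    choose e he using this
    have hxe : x ∘ e = z := funext he
    simp only [Finset.mem_biUnion, Finset.mem_univ, true_and, Finset.mem_filter, Prod.exists]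
    refine ⟨s, e, hx, ?_, hxe ▸ hhom⟩
    have := hhom.1
    rw [← hxe] at this
    exact this.of_comp
  have hsum : ((Ω.filter (fun x => Function.Injective x)).card : ℝ) ≤
      ∑ se : Bool × (Fin h → Fin R),
        ((Ω.filter (fun x => Function.Injective se.2 ∧ Hom' G se.1 (x ∘ se.2))).card : ℝ) := by
    exact_mod_cast (Finset.card_le_card hcover).trans Finset.card_biUnion_le
  have hsum2 := hsum.trans (Finset.sum_le_sum fun se _ => hbd se.1 se.2)
  simp only [Finset.sum_const, Finset.card_univ, Fintype.card_prod, Fintype.card_bool,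
    Fintype.card_fun, Fintype.card_fin, nsmul_eq_mul] at hsum2
  push_cast at hsum2
  have hlt : 2 * (R : ℝ) ^ h * (1 / (4 * ((R : ℝ) ^ h + 1)) * Ω.card) < Ω.card / 2 := by
    rw [div_mul_eq_mul_div, mul_div_assoc', div_lt_div_iff₀ hC (by norm_num)]
    nlinarith
  linarith

/-- `Ψ` is separable in the variables `p`, `q`. -/
def Sep' {n : ℕ} {ι : Type*} [DecidableEq ι] (Ψ : (ι → Fin n) → Prop) (p q : ι) : Prop :=
  ∀ x, ∃ u v : Fin n → Prop, ∀ s t,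
    Ψ (Function.update (Function.update x p s) q t) ↔ (u s ∧ v t)

lemma Sep'.and {n : ℕ} {ι : Type*} [DecidableEq ι] {Ψ Ψ' : (ι → Fin n) → Prop} {p q : ι}
    (h : Sep' Ψ p q) (h' : Sep' Ψ' p q) : Sep' (fun x => Ψ x ∧ Ψ' x) p q := by
  intro x
  obtain ⟨u, v, huv⟩ := h x
  obtain ⟨u', v', huv'⟩ := h' x
  refine ⟨fun s => u s ∧ u' s, fun t => v t ∧ v' t, fun s t => ?_⟩
  simp only [huv, huv']; tauto

lemma Sep'.ball {n : ℕ} {ι τ : Type*} [DecidableEq ι] (E : Finset τ) (Ψ : τ → (ι → Fin n) → Prop)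
    {p q : ι} (h : ∀ e ∈ E, Sep' (Ψ e) p q) : Sep' (fun x => ∀ e ∈ E, Ψ e x) p q := by
  intro x
  have : ∀ e, ∃ u v : Fin n → Prop, e ∈ E → ∀ s t,
      Ψ e (Function.update (Function.update x p s) q t) ↔ (u s ∧ v t) := by
    intro e
    by_cases he : e ∈ E
    · obtain ⟨u, v, huv⟩ := h e he x
      exact ⟨u, v, fun _ => huv⟩
    · exact ⟨fun _ => True, fun _ => True, fun h => absurd h he⟩
  choose u v huv using this
  refine ⟨fun s => ∀ e ∈ E, u e s, fun t => ∀ e ∈ E, v e t, fun s t => ?_⟩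
  constructor
  · intro hh
    exact ⟨fun e he => ((huv e he s t).1 (hh e he)).1, fun e he => ((huv e he s t).1 (hh e he)).2⟩
  · intro hh e he
    exact (huv e he s t).2 ⟨hh.1 e he, hh.2 e he⟩

lemma sep_edge {n : ℕ} {ι : Type*} [DecidableEq ι] (g : Fin n → Fin n → Prop) {p q p' q' : ι}
    (hpq : p ≠ q) (h : (p' ≠ p ∧ p' ≠ q) ∨ (q' ≠ p ∧ q' ≠ q)) :
    Sep' (fun x => g (x p') (x q')) p q := by
  intro x
  rcases h with ⟨h1, h2⟩ | ⟨h1, h2⟩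
  · by_cases hq : q' = q
    · subst hq
      exact ⟨fun _ => True, fun t => g (x p') t, fun s t => by simp [h1, h2]⟩
    · by_cases hp : q' = p
      · subst hp
        exact ⟨fun s => g (x p') s, fun _ => True, fun s t => by simp [h1, h2, hq]⟩
      · exact ⟨fun _ => g (x p') (x q'), fun _ => True, fun s t => by simp [h1, h2, hq, hp]⟩
  · by_cases hq : p' = q
    · subst hq
      exact ⟨fun _ => True, fun t => g t (x q'), fun s t => by simp [h1, h2]⟩
    · by_cases hp : p' = p
      · subst hp
        exact ⟨fun s => g s (x q'), fun _ => True, fun s t => by simp [h1, h2, hq]⟩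
      · exact ⟨fun _ => g (x p') (x q'), fun _ => True, fun s t => by simp [h1, h2, hq, hp]⟩

/-- Lower regularity of a relation on a pair of sets. -/
def LowReg {n : ℕ} (g : Fin n → Fin n → Prop) (a η : ℝ) (X Y : Finset (Fin n)) : Prop :=
  ∀ A ⊆ X, ∀ B ⊆ Y, a * ((A.card : ℝ) * B.card) - η * ((X.card : ℝ) * Y.card) ≤
    ∑ s ∈ A, ∑ t ∈ B, if g s t then (1 : ℝ) else 0

lemma count_step {n : ℕ} {ι : Type*} [Fintype ι] [DecidableEq ι] (X : ι → Finset (Fin n))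
    (hX : ∀ i, (X i).Nonempty) {p q : ι} (hpq : p ≠ q) (Ψ : (ι → Fin n) → Prop) (hsep : Sep' Ψ p q)
    (g : Fin n → Fin n → Prop) {a η : ℝ} (hL : LowReg g a η (X p) (X q)) [DecidablePred Ψ]
    [DecidablePred (fun x : ι → Fin n => Ψ x ∧ g (x p) (x q))] :
    a * (((Fintype.piFinset X).filter Ψ).card : ℝ) - η * ((Fintype.piFinset X).card : ℝ) ≤
      (((Fintype.piFinset X).filter (fun x => Ψ x ∧ g (x p) (x q))).card : ℝ) := by
  have c1 : (((Fintype.piFinset X).filter Ψ).card : ℝ) =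
      ∑ x ∈ Fintype.piFinset X, if Ψ x then (1 : ℝ) else 0 := by
    rw [Finset.card_filter]; push_cast; rfl
  have c2 : (((Fintype.piFinset X).filter (fun x => Ψ x ∧ g (x p) (x q))).card : ℝ) =
      ∑ x ∈ Fintype.piFinset X, if Ψ x ∧ g (x p) (x q) then (1 : ℝ) else 0 := by
    rw [Finset.card_filter]; push_cast; rfl
  have hM : 0 < ((X p).card : ℝ) * (X q).card := by
    have h1 : 0 < ((X p).card : ℝ) := by exact_mod_cast Finset.card_pos.2 (hX p)
    have h2 : 0 < ((X q).card : ℝ) := by exact_mod_cast Finset.card_pos.2 (hX q)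
    positivity
  refine le_of_mul_le_mul_left ?_ hM
  have e1 := pi_update2 X p q (fun x => if Ψ x then (1 : ℝ) else 0)
  have e2 := pi_update2 X p q (fun x => if Ψ x ∧ g (x p) (x q) then (1 : ℝ) else 0)
  rw [c2, ← e2]
  have e3 : ((X p).card : ℝ) * (X q).card * (a * (((Fintype.piFinset X).filter Ψ).card : ℝ) -
      η * ((Fintype.piFinset X).card : ℝ)) =
      ∑ x ∈ Fintype.piFinset X, (a * (∑ s ∈ X p, ∑ t ∈ X q,
        if Ψ (Function.update (Function.update x p s) q t) then (1 : ℝ) else 0) -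
        η * (((X p).card : ℝ) * (X q).card)) := by
    rw [Finset.sum_sub_distrib, ← Finset.mul_sum, e1, c1]
    simp only [Finset.sum_const, nsmul_eq_mul]
    ring
  rw [e3]
  refine Finset.sum_le_sum fun x _ => ?_
  obtain ⟨u, v, huv⟩ := hsep x
  have h := hL ((X p).filter u) (Finset.filter_subset _ _) ((X q).filter v) (Finset.filter_subset _ _)
  have s1 : (∑ s ∈ X p, ∑ t ∈ X q,
        if Ψ (Function.update (Function.update x p s) q t) then (1 : ℝ) else 0) =
        (((X p).filter u).card : ℝ) * ((X q).filter v).card := by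
    rw [Finset.card_filter, Finset.card_filter]
    push_cast
    rw [Finset.sum_mul_sum]
    refine Finset.sum_congr rfl fun s _ => Finset.sum_congr rfl fun t _ => ?_
    simp only [huv]
    by_cases h1 : u s <;> by_cases h2 : v t <;> simp [h1, h2]
  have s2 : (∑ s ∈ X p, ∑ t ∈ X q, if Ψ (Function.update (Function.update x p s) q t) ∧
      g (Function.update (Function.update x p s) q t p)
        (Function.update (Function.update x p s) q t q) then (1 : ℝ) else 0) =
        ∑ s ∈ (X p).filter u, ∑ t ∈ (X q).filter v, if g s t then (1 : ℝ) else 0 := by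
    rw [Finset.sum_filter]
    refine Finset.sum_congr rfl fun s _ => ?_
    by_cases h1 : u s
    · rw [if_pos h1, Finset.sum_filter]
      refine Finset.sum_congr rfl fun t _ => ?_
      simp only [huv]
      by_cases h2 : v t <;> simp [h1, h2, hpq]
    · rw [if_neg h1]
      refine Finset.sum_eq_zero fun t _ => ?_
      simp only [huv]; simp [h1]
  rw [s1, s2]
  exact h

lemma count_all {n : ℕ} {ι τ : Type*} [Fintype ι] [DecidableEq ι] (X : ι → Finset (Fin n))
    (hX : ∀ i, (X i).Nonempty) (Φ : (ι → Fin n) → Prop) (P Q : τ → ι)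
    (g : τ → Fin n → Fin n → Prop) {a η : ℝ} (ha0 : 0 ≤ a) (ha1 : a ≤ 1) (hη : 0 ≤ η) (E : Finset τ)
    (hne : ∀ e ∈ E, P e ≠ Q e)
    (hΦ : ∀ e ∈ E, Sep' Φ (P e) (Q e))
    (hdist : ∀ e ∈ E, ∀ e' ∈ E, e ≠ e' →
      (P e' ≠ P e ∧ P e' ≠ Q e) ∨ (Q e' ≠ P e ∧ Q e' ≠ Q e))
    (hL : ∀ e ∈ E, LowReg (g e) a η (X (P e)) (X (Q e))) :
    a ^ E.card * (((Fintype.piFinset X).filter Φ).card : ℝ) -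
      E.card * η * ((Fintype.piFinset X).card : ℝ) ≤
      (((Fintype.piFinset X).filter (fun x => Φ x ∧ ∀ e ∈ E, g e (x (P e)) (x (Q e)))).card : ℝ) := by
  induction E using Finset.induction_on with
  | empty => simp
  | insert e E he ih =>
    have ih' := ih (fun e he => hne e (Finset.mem_insert_of_mem he))
      (fun e he => hΦ e (Finset.mem_insert_of_mem he))
      (fun e he e' he' => hdist e (Finset.mem_insert_of_mem he) e' (Finset.mem_insert_of_mem he'))
      (fun e he => hL e (Finset.mem_insert_of_mem he))
    have hme := Finset.mem_insert_self e E
    have hs : Sep' (fun x => Φ x ∧ ∀ e ∈ E, g e (x (P e)) (x (Q e))) (P e) (Q e) := by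
      refine (hΦ e hme).and (Sep'.ball E (fun e x => g e (x (P e)) (x (Q e))) ?_)
      intro e' he'
      refine sep_edge _ (hne e hme) (hdist e hme e' (Finset.mem_insert_of_mem he') ?_)
      rintro rfl; exact he he'
    have hstep := count_step X hX (hne e hme) _ hs (g e) (hL e hme)
    have hcongr : ((Fintype.piFinset X).filter (fun x => (Φ x ∧ ∀ e ∈ E, g e (x (P e)) (x (Q e))) ∧
        g e (x (P e)) (x (Q e)))) = ((Fintype.piFinset X).filter
          (fun x => Φ x ∧ ∀ e' ∈ insert e E, g e' (x (P e')) (x (Q e')))) := by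
      refine Finset.filter_congr fun x _ => ?_
      simp only [Finset.forall_mem_insert]
      tauto
    rw [← hcongr]
    refine le_trans ?_ hstep
    rw [Finset.card_insert_of_notMem he]
    have h1 := mul_le_mul_of_nonneg_left ih' ha0
    push_cast
    have h2 : a * (E.card * η * ((Fintype.piFinset X).card : ℝ)) ≤
        E.card * η * ((Fintype.piFinset X).card : ℝ) :=
      mul_le_of_le_one_left (by positivity) ha1
    rw [pow_succ]
    linarith

/-- Separability of a product over cells. -/
lemma sep_cells {n k h : ℕ} (Q : Fin k → (Fin h → Fin n) → Prop) {p q : Fin k × Fin h}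
    (hpq : p.1 ≠ q.1) : Sep' (fun x : Fin k × Fin h → Fin n => ∀ i, Q i (fun a => x (i, a))) p q := by
  intro x
  refine ⟨fun s => Q p.1 (fun a => Function.update x p s (p.1, a)),
    fun t => ∀ i, i ≠ p.1 → Q i (fun a => Function.update x q t (i, a)), fun s t => ?_⟩
  have e1 : (fun a => Function.update (Function.update x p s) q t (p.1, a)) =
      (fun a => Function.update x p s (p.1, a)) := by
    funext a
    rw [Function.update_of_ne]
    intro hh; exact hpq (by rw [← hh])
  have e2 : ∀ i, i ≠ p.1 → (fun a => Function.update (Function.update x p s) q t (i, a)) =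
      (fun a => Function.update x q t (i, a)) := by
    intro i hi
    funext a
    by_cases hq : (i, a) = q
    · subst hq; simp
    · rw [Function.update_of_ne hq, Function.update_of_ne hq, Function.update_of_ne]
      intro hh; exact hi (by rw [← hh])
  constructor
  · intro hh
    refine ⟨?_, fun i hi => ?_⟩
    · have h1 := hh p.1
      rw [e1] at h1; exact h1
    · have h1 := hh i
      rw [e2 i hi] at h1; exact h1
  · rintro ⟨h1, h2⟩ i
    by_cases hi : i = p.1
    · subst hi; rw [e1]; exact h1
    · rw [e2 i hi]; exact h2 i hi

lemma count_cells {n k h : ℕ} (X : Fin k → Finset (Fin n)) (Q : Fin k → (Fin h → Fin n) → Prop)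
    {ζ : ℝ} (hζ : 0 ≤ ζ)
    (hQ : ∀ i, ζ * ((Fintype.piFinset (fun _ : Fin h => X i)).card : ℝ) ≤
      (((Fintype.piFinset (fun _ : Fin h => X i)).filter (Q i)).card : ℝ)) :
    ζ ^ k * ((Fintype.piFinset (fun ia : Fin k × Fin h => X ia.1)).card : ℝ) ≤
      (((Fintype.piFinset (fun ia : Fin k × Fin h => X ia.1)).filter
        (fun x => ∀ i, Q i (fun a => x (i, a)))).card : ℝ) := by
  have h1 : ((Fintype.piFinset (fun ia : Fin k × Fin h => X ia.1)).filter
        (fun x => ∀ i, Q i (fun a => x (i, a)))).card =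
      (Fintype.piFinset (fun i => (Fintype.piFinset (fun _ : Fin h => X i)).filter (Q i))).card := by
    refine Finset.card_nbij' (fun x i a => x (i, a)) (fun z ia => z ia.1 ia.2) ?_ ?_ ?_ ?_
    · intro x hx
      simp only [Finset.mem_coe, Finset.mem_filter, Fintype.mem_piFinset] at hx ⊢
      exact fun i => ⟨fun a => hx.1 (i, a), hx.2 i⟩
    · intro z hz
      simp only [Finset.mem_coe, Finset.mem_filter, Fintype.mem_piFinset] at hz ⊢
      exact ⟨fun ia => (hz ia.1).1 ia.2, fun i => (hz i).2⟩
    · intro x _; rfl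
    · intro x _; rfl
  rw [h1, Fintype.card_piFinset, Fintype.card_piFinset, Fintype.prod_prod_type]
  push_cast
  calc ζ ^ k * ∏ i : Fin k, ∏ _a : Fin h, ((X i).card : ℝ)
      = ∏ i : Fin k, (ζ * ((Fintype.piFinset (fun _ : Fin h => X i)).card : ℝ)) := by
        rw [Finset.prod_mul_distrib]; simp
    _ ≤ _ := Finset.prod_le_prod (fun i _ => by positivity) fun i _ => hQ i

lemma her_iso {P : ∀ n : ℕ, Set (SimpleGraph (Fin n))} (hP : IsHereditary P) {m n : ℕ}
    {G : SimpleGraph (Fin n)} (hG : G ∈ P n) (S : Finset (Fin n)) (hc : S.card = m)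
    (H : SimpleGraph (Fin m)) (e : Fin m ≃ S) (he : ∀ a b, H.Adj a b ↔ G.Adj (e a) (e b)) :
    H ∈ P m := by
  subst hc
  refine hP.1 _ (inducedCopy G S) H ⟨⟨(S.orderIsoOfFin rfl).toEquiv.trans e.symm, ?_⟩⟩ (hP.2 n G hG S)
  intro a b
  rw [he]
  simp [inducedCopy]

lemma her_comap {P : ∀ n : ℕ, Set (SimpleGraph (Fin n))} (hP : IsHereditary P) {m n : ℕ}
    {G : SimpleGraph (Fin n)} (hG : G ∈ P n) (φ : Fin m → Fin n) (hφ : Function.Injective φ) :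
    G.comap φ ∈ P m := by
  have hmem : ∀ a, φ a ∈ Finset.univ.image φ := fun a => Finset.mem_image_of_mem _ (Finset.mem_univ _)
  refine her_iso hP hG (Finset.univ.image φ) ?_ _
    (Equiv.ofBijective (fun a => (⟨φ a, hmem a⟩ : (Finset.univ.image φ : Finset (Fin n)))) ⟨?_, ?_⟩) ?_
  · rw [Finset.card_image_of_injective _ hφ]; simp
  · intro a b hab; exact hφ (Subtype.ext_iff.1 hab)
  · rintro ⟨x, hx⟩
    obtain ⟨a, _, rfl⟩ := Finset.mem_image.1 hx
    exact ⟨a, rfl⟩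
  · intro a b; rfl

lemma bad_of_comap {P : ∀ n : ℕ, Set (SimpleGraph (Fin n))} (hP : IsHereditary P) {m n : ℕ}
    {G : SimpleGraph (Fin n)} (φ : Fin m → Fin n) (hφ : Function.Injective φ)
    (hb : G.comap φ ∉ P m) (T : Finset (Fin n)) (hT : ∀ a, φ a ∈ T) : inducedCopy G T ∉ P T.card := by
  intro h
  apply hb
  have := her_comap hP h (fun a => (T.orderIsoOfFin rfl).symm ⟨φ a, hT a⟩) (by
    intro a b hab
    have h1 := (T.orderIsoOfFin rfl).symm.injective hab
    exact hφ (Subtype.ext_iff.1 h1))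
  convert this using 1
  have hh : ∀ a, ((T.orderIsoOfFin rfl) ((T.orderIsoOfFin rfl).symm ⟨φ a, hT a⟩)).1 = φ a := by
    intro a; rw [OrderIso.apply_symm_apply]
  ext a b
  simp only [inducedCopy, SimpleGraph.comap_adj, hh]

lemma bad_mono {P : ∀ n : ℕ, Set (SimpleGraph (Fin n))} (hP : IsHereditary P) {n : ℕ}
    {G : SimpleGraph (Fin n)} {S T : Finset (Fin n)} (hST : S ⊆ T)
    (hb : inducedCopy G S ∉ P S.card) : inducedCopy G T ∉ P T.card := by
  refine bad_of_comap hP (fun i => (S.orderIsoOfFin rfl i).1) ?_ hb T ?_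
  · intro a b hab
    exact (S.orderIsoOfFin rfl).injective (Subtype.ext hab)
  · intro a; exact hST (S.orderIsoOfFin rfl a).2

lemma card_super {n k : ℕ} (T : Finset (Fin n)) (hT : T.card ≤ k) :
    ((Finset.powersetCard k (Finset.univ : Finset (Fin n))).filter (fun S => T ⊆ S)).card =
      (n - T.card).choose (k - T.card) := by
  have : (n - T.card).choose (k - T.card) = (Finset.powersetCard (k - T.card) (Tᶜ)).card := by
    rw [Finset.card_powersetCard, Finset.card_compl, Fintype.card_fin]
  rw [this]
  refine Finset.card_nbij' (fun S => S \ T) (fun S => S ∪ T) ?_ ?_ ?_ ?_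
  · intro S hS
    simp only [Finset.mem_coe, Finset.mem_filter, Finset.mem_powersetCard] at hS ⊢
    refine ⟨fun x hx => by simp at hx ⊢; exact hx.2, ?_⟩
    rw [Finset.card_sdiff_of_subset hS.2, hS.1.2]
  · intro S hS
    simp only [Finset.mem_coe, Finset.mem_filter, Finset.mem_powersetCard] at hS ⊢
    refine ⟨⟨Finset.subset_univ _, ?_⟩, Finset.subset_union_right⟩
    rw [Finset.card_union_of_disjoint, hS.2]
    · omega
    · rw [Finset.disjoint_left]; intro x hx
      have := hS.1 hx; simpa using this
  · intro S hS
    simp only [Finset.mem_coe, Finset.mem_filter] at hS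
    exact Finset.sdiff_union_of_subset hS.2
  · intro S hS
    simp only [Finset.mem_coe, Finset.mem_powersetCard] at hS
    simp only
    rw [Finset.union_sdiff_right]
    refine Finset.sdiff_eq_self_of_disjoint ?_
    rw [Finset.disjoint_left]; intro x hx
    have := hS.1 hx; simpa using this

lemma card_inj {n : ℕ} {κ : Type*} [Fintype κ] [DecidableEq κ] (S : Finset (Fin n)) :
    ((Finset.univ : Finset (κ → Fin n)).filter
      (fun x => Function.Injective x ∧ Finset.univ.image x ⊆ S)).card =
      S.card.descFactorial (Fintype.card κ) := by
  have h1 : S.card.descFactorial (Fintype.card κ) = Fintype.card (κ ↪ S) := by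
    rw [Fintype.card_embedding_eq, Fintype.card_coe]
  rw [h1, ← Finset.card_univ]
  symm
  refine Finset.card_bij (fun f _ a => (f a : Fin n)) ?_ ?_ ?_
  · intro f _
    simp only [Finset.mem_filter, Finset.mem_univ, true_and]
    refine ⟨fun a b hab => f.injective (Subtype.ext hab), ?_⟩
    intro y hy
    obtain ⟨a, _, rfl⟩ := Finset.mem_image.1 hy
    exact (f a).2
  · intro f _ g _ hfg
    ext a
    exact congrArg Fin.val (congrFun hfg a)
  · intro x hx
    simp only [Finset.mem_filter, Finset.mem_univ, true_and] at hx
    refine ⟨⟨fun a => ⟨x a, hx.2 (Finset.mem_image_of_mem _ (Finset.mem_univ _))⟩, ?_⟩,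
      Finset.mem_univ _, rfl⟩
    intro a b hab
    exact hx.1 (Subtype.ext_iff.1 hab)

lemma sampling (ι : Type) [Fintype ι] [DecidableEq ι] (c : ℝ) (hc : 0 < c) :
    ∃ kε : ℕ, 1 ≤ kε ∧ ∀ (n : ℕ) (B : Finset (Fin n) → Prop), (∀ S T, S ⊆ T → B S → B T) →
      c * (n : ℝ) ^ (Fintype.card ι) ≤
        (((Finset.univ : Finset (ι → Fin n)).filter (fun x => B (Finset.univ.image x))).card : ℝ) →
      ∀ k, kε ≤ k → k ≤ n →
        (((Finset.powersetCard k (Finset.univ : Finset (Fin n))).filter (fun S => ¬ B S)).card : ℝ) ≤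
          (1/3 : ℝ) * ((Finset.powersetCard k (Finset.univ : Finset (Fin n))).card : ℝ) := by
  set r : ℝ := 1 - min c 1 with hr
  have hr0 : 0 ≤ r := by rw [hr]; linarith [min_le_right c 1]
  have hr1 : r < 1 := by rw [hr]; linarith [lt_min hc one_pos]
  obtain ⟨t, ht⟩ := exists_pow_lt_of_lt_one (show (0:ℝ) < 1/6 by norm_num) hr1
  set K := Fintype.card (Fin t × ι) with hK
  refine ⟨K + 2 * K ^ 2 + 1, by omega, ?_⟩
  intro n B hB hcount k hk hkn
  set g := (((Finset.univ : Finset (ι → Fin n)).filter (fun x => ¬ B (Finset.univ.image x))).card : ℝ) with hg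
  have hn : 0 < n := by omega
  have hg1 : g ≤ r * (n : ℝ) ^ (Fintype.card ι) := by
    have h1 := Finset.card_filter_add_card_filter_not (s := (Finset.univ : Finset (ι → Fin n)))
      (fun x => B (Finset.univ.image x))
    have h2 : (((Finset.univ : Finset (ι → Fin n)).filter (fun x => B (Finset.univ.image x))).card : ℝ)
      + g = (n : ℝ) ^ (Fintype.card ι) := by
      rw [hg]; exact_mod_cast (by rw [h1]; simp)
    have h3 : min c 1 * (n : ℝ) ^ (Fintype.card ι) ≤ c * (n : ℝ) ^ (Fintype.card ι) :=
      mul_le_mul_of_nonneg_right (min_le_left _ _) (by positivity)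
    rw [hr]; nlinarith
  set A := (Finset.univ : Finset (Fin t × ι → Fin n)).filter (fun x => ¬ B (Finset.univ.image x)) with hA
  have hAcard : (A.card : ℝ) ≤ g ^ t := by
    have h1 : A.card ≤ (Fintype.piFinset (fun _ : Fin t => (Finset.univ : Finset (ι → Fin n)).filter
        (fun x => ¬ B (Finset.univ.image x)))).card := by
      refine Finset.card_le_card_of_injOn (fun x j a => x (j, a)) ?_ ?_
      · intro x hx
        simp only [hA, Finset.coe_filter, Finset.mem_univ, true_and, Set.mem_ofPred_eq] at hx
        simp only [Finset.mem_coe, Fintype.mem_piFinset, Finset.mem_filter, Finset.mem_univ, true_and]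
        intro j hj
        refine hx (hB _ _ ?_ hj)
        intro y hy
        obtain ⟨a, _, rfl⟩ := Finset.mem_image.1 hy
        exact Finset.mem_image_of_mem _ (Finset.mem_univ _)
      · intro x _ y _ hxy
        funext ⟨j, a⟩
        exact congrFun (congrFun hxy j) a
    rw [Fintype.card_piFinset] at h1
    simp only [Finset.prod_const, Finset.card_univ, Fintype.card_fin] at h1
    rw [hg]; exact_mod_cast h1
  have hA2 : (A.card : ℝ) ≤ 1/6 * (n : ℝ) ^ K := by
    calc (A.card : ℝ) ≤ g ^ t := hAcard
      _ ≤ (r * (n : ℝ) ^ (Fintype.card ι)) ^ t := pow_le_pow_left₀ (by rw [hg]; positivity) hg1 t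
      _ = r ^ t * (n : ℝ) ^ K := by
        rw [mul_pow, ← pow_mul, hK, Fintype.card_prod, Fintype.card_fin, mul_comm t]
      _ ≤ _ := mul_le_mul_of_nonneg_right ht.le (by positivity)
  set I := (Finset.univ : Finset (Fin t × ι → Fin n)).filter (fun x => Function.Injective x) with hI
  have hIcard : (n : ℝ) ^ K ≤ 2 * (I.card : ℝ) := by
    have h1 := inj_half (ι := Fin t × ι) (Finset.univ : Finset (Fin n)) (by simpa using hn) (by
      rw [Finset.card_univ, Fintype.card_fin, ← hK]; omega)
    simpa [hI, hK] using h1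
  have hAI : (A.card : ℝ) ≤ 1/3 * (I.card : ℝ) := by linarith
  set d := k.descFactorial K with hd
  have hdpos : 0 < d := Nat.descFactorial_pos.2 (by omega)
  set e := (n - K).choose (k - K) with he
  set pk := Finset.powersetCard k (Finset.univ : Finset (Fin n)) with hpk
  have hIT : ∀ x ∈ I, (pk.filter (fun S => Finset.univ.image x ⊆ S)).card = e := by
    intro x hx
    have hinj : Function.Injective x := (Finset.mem_filter.1 hx).2
    have h1 : (Finset.univ.image x).card = K := by
      rw [Finset.card_image_of_injective _ hinj, Finset.card_univ]
    rw [hpk, card_super _ (by rw [h1]; omega), h1]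
  have hSd : ∀ S ∈ pk, (I.filter (fun x => Finset.univ.image x ⊆ S)).card = d := by
    intro S hS
    rw [hI, Finset.filter_filter]
    have := card_inj (κ := Fin t × ι) S
    rw [(Finset.mem_powersetCard.1 hS).2] at this
    rw [hd, ← this]
  have dc1 : pk.card * d = I.card * e := by
    have h := Finset.sum_card_bipartiteAbove_eq_sum_card_bipartiteBelow
      (s := pk) (t := I) (fun S x => Finset.univ.image x ⊆ S)
    simp only [Finset.bipartiteAbove, Finset.bipartiteBelow] at h
    rw [Finset.sum_congr rfl hSd, Finset.sum_congr rfl hIT] at h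
    simpa using h
  have dc2 : (pk.filter (fun S => ¬ B S)).card * d ≤ A.card * e := by
    have h := Finset.sum_card_bipartiteAbove_eq_sum_card_bipartiteBelow
      (s := pk.filter (fun S => ¬ B S)) (t := I) (fun S x => Finset.univ.image x ⊆ S)
    simp only [Finset.bipartiteAbove, Finset.bipartiteBelow] at h
    rw [Finset.sum_congr rfl (fun S hS => hSd S (Finset.mem_filter.1 hS).1)] at h
    rw [Finset.sum_const, smul_eq_mul] at h
    rw [h]
    have h2 : ∑ x ∈ I, ((pk.filter (fun S => ¬ B S)).filter
        (fun S => Finset.univ.image x ⊆ S)).card ≤ ∑ x ∈ I, if x ∈ A then e else 0 := by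
      refine Finset.sum_le_sum fun x hx => ?_
      by_cases hxA : x ∈ A
      · rw [if_pos hxA, ← hIT x hx]
        refine Finset.card_le_card ?_
        intro S hS
        simp only [Finset.mem_filter] at hS ⊢
        exact ⟨hS.1.1, hS.2⟩
      · rw [if_neg hxA]
        simp only [nonpos_iff_eq_zero, Finset.card_eq_zero]
        refine Finset.eq_empty_of_forall_notMem fun S hS => ?_
        simp only [Finset.mem_filter] at hS
        apply hxA
        rw [hA, Finset.mem_filter]
        exact ⟨Finset.mem_univ _, fun hb => hS.1.2 (hB _ _ hS.2 hb)⟩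
    refine h2.trans ?_
    rw [← Finset.sum_filter, Finset.sum_const, smul_eq_mul]
    refine Nat.mul_le_mul_right _ (Finset.card_le_card ?_)
    intro x hx; exact (Finset.mem_filter.1 hx).2
  have hd' : (0 : ℝ) < d := by exact_mod_cast hdpos
  have dc1' : (pk.card : ℝ) * d = I.card * e := by exact_mod_cast dc1
  have dc2' : ((pk.filter (fun S => ¬ B S)).card : ℝ) * d ≤ A.card * e := by exact_mod_cast dc2
  refine le_of_mul_le_mul_right ?_ hd'
  calc ((pk.filter (fun S => ¬ B S)).card : ℝ) * d ≤ A.card * e := dc2'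
    _ ≤ 1/3 * (I.card : ℝ) * e := mul_le_mul_of_nonneg_right hAI (by positivity)
    _ = 1/3 * (pk.card : ℝ) * d := by rw [mul_assoc, ← dc1', mul_assoc]

/-- A coloured pattern on `k` cells. -/
def Conf {k : ℕ} (R : Finset (Fin k) × (Fin k → Bool) × (Fin k → Fin k → Option Bool)) {n : ℕ}
    (H : SimpleGraph (Fin n)) (c : Fin n → Fin k) : Prop :=
  (∀ u, c u ∈ R.1) ∧ ∀ u v, u ≠ v → (c u = c v → (H.Adj u v ↔ R.2.1 (c u) = true)) ∧
    (c u ≠ c v → ∀ b, R.2.2 (c u) (c v) = some b → (H.Adj u v ↔ b = true))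

lemma pat_bound (P : ∀ n : ℕ, Set (SimpleGraph (Fin n))) (k : ℕ) :
    ∃ h : ℕ, ∀ R : Finset (Fin k) × (Fin k → Bool) × (Fin k → Fin k → Option Bool),
      (∃ (n : ℕ) (H : SimpleGraph (Fin n)) (c : Fin n → Fin k), H ∉ P n ∧ Conf R H c) →
      ∃ m ≤ h, ∃ (F : SimpleGraph (Fin m)) (c : Fin m → Fin k), F ∉ P m ∧ Conf R F c := by
  have : ∀ R : Finset (Fin k) × (Fin k → Bool) × (Fin k → Fin k → Option Bool), ∃ h : ℕ,
      (∃ (n : ℕ) (H : SimpleGraph (Fin n)) (c : Fin n → Fin k), H ∉ P n ∧ Conf R H c) →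
      ∃ m ≤ h, ∃ (F : SimpleGraph (Fin m)) (c : Fin m → Fin k), F ∉ P m ∧ Conf R F c := by
    intro R
    by_cases hR : (∃ (n : ℕ) (H : SimpleGraph (Fin n)) (c : Fin n → Fin k), H ∉ P n ∧ Conf R H c)
    · obtain ⟨n, H, c, h⟩ := hR
      exact ⟨n, fun _ => ⟨n, le_rfl, H, c, h⟩⟩
    · exact ⟨0, fun h => absurd h hR⟩
  choose f hf using this
  refine ⟨Finset.univ.sup f, fun R hR => ?_⟩
  obtain ⟨m, hm, F⟩ := hf R hR
  exact ⟨m, hm.trans (Finset.le_sup (Finset.mem_univ R)), F⟩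

/-- The indicator function of adjacency. -/
noncomputable def adjf {n : ℕ} (G : SimpleGraph (Fin n)) : Fin n → Fin n → ℝ :=
  fun u v => if G.Adj u v then 1 else 0

lemma lowreg_adj {n : ℕ} (G : SimpleGraph (Fin n)) {a η : ℝ} {X Y : Finset (Fin n)}
    (h : RegP (adjf G) η X Y) (hd : a ≤ dS (adjf G) X Y) : LowReg (fun s t => G.Adj s t) a η X Y := by
  intro A hA B hB
  have h1 := (abs_le.1 (h A hA B hB)).1
  have h2 : (∑ s ∈ A, ∑ t ∈ B, if G.Adj s t then (1 : ℝ) else 0) = eS (adjf G) A B := rfl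
  rw [h2]
  have h3 : a * ((A.card : ℝ) * B.card) ≤ dS (adjf G) X Y * ((A.card : ℝ) * B.card) :=
    mul_le_mul_of_nonneg_right hd (by positivity)
  linarith

lemma lowreg_nadj {n : ℕ} (G : SimpleGraph (Fin n)) {a η : ℝ} {X Y : Finset (Fin n)}
    (h : RegP (adjf G) η X Y) (hd : dS (adjf G) X Y ≤ 1 - a) :
    LowReg (fun s t => ¬ G.Adj s t) a η X Y := by
  intro A hA B hB
  have h1 := (abs_le.1 (h A hA B hB)).2
  have h2 : (∑ s ∈ A, ∑ t ∈ B, if ¬ G.Adj s t then (1 : ℝ) else 0) =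
      (A.card : ℝ) * B.card - eS (adjf G) A B := by
    have : (A.card : ℝ) * B.card = ∑ s ∈ A, ∑ t ∈ B, (1 : ℝ) := by simp
    rw [this, eS, ← Finset.sum_sub_distrib]
    refine Finset.sum_congr rfl fun s _ => ?_
    rw [← Finset.sum_sub_distrib]
    refine Finset.sum_congr rfl fun t _ => ?_
    by_cases hst : G.Adj s t <;> simp [adjf, hst]
  have h3 : dS (adjf G) X Y * ((A.card : ℝ) * B.card) ≤ (1 - a) * ((A.card : ℝ) * B.card) :=
    mul_le_mul_of_nonneg_right hd (by positivity)
  have h4 : a * ((A.card : ℝ) * B.card) - η * ((X.card : ℝ) * Y.card) ≤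
      (A.card : ℝ) * B.card - eS (adjf G) A B := by linarith
  refine h4.trans (le_of_eq ?_)
  rw [← h2]
  exact Finset.sum_congr rfl fun s _ => Finset.sum_congr rfl fun t _ => by congr

lemma count_bad {P : ∀ n : ℕ, Set (SimpleGraph (Fin n))} (hP : IsHereditary P) {n k h m : ℕ}
    (G : SimpleGraph (Fin n)) {a η ζ : ℝ} (ha0 : 0 < a) (ha : a ≤ 1/2) (hη : 0 ≤ η) (hζ : 0 < ζ)
    (hζ1 : ζ ≤ 1) (hηζ : (h : ℝ) ^ 2 * η ≤ a ^ (h ^ 2) * ζ ^ k / 2)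
    (X : Fin k → Finset (Fin n)) (hX : ∀ i, (X i).Nonempty)
    (R : Finset (Fin k) × (Fin k → Bool) × (Fin k → Fin k → Option Bool))
    (hdisj : ∀ i ∈ R.1, ∀ j ∈ R.1, i ≠ j → Disjoint (X i) (X j))
    (hreg : ∀ i ∈ R.1, ∀ j ∈ R.1, i ≠ j → RegP (adjf G) η (X i) (X j))
    (hs : ∀ i ∈ R.1, ζ * ((Fintype.piFinset (fun _ : Fin h => X i)).card : ℝ) ≤
        (((Fintype.piFinset (fun _ : Fin h => X i)).filter (Hom' G (R.2.1 i))).card : ℝ))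
    (hρ : ∀ i j, R.2.2 i j = if dS (adjf G) (X i) (X j) < a then some false else
      if 1 - a < dS (adjf G) (X i) (X j) then some true else none)
    (hm : m ≤ h) (F : SimpleGraph (Fin m)) (hF : F ∉ P m) (c : Fin m → Fin k) (hc : Conf R F c) :
    a ^ (h ^ 2) * ζ ^ k / 2 * ((Fintype.piFinset (fun ia : Fin k × Fin h => X ia.1)).card : ℝ) ≤
      (((Finset.univ : Finset (Fin k × Fin h → Fin n)).filter
        (fun x => inducedCopy G (Finset.univ.image x) ∉ P (Finset.univ.image x).card)).card : ℝ) := by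
  set pi := Fintype.piFinset (fun ia : Fin k × Fin h => X ia.1) with hpi
  obtain ⟨Q, hQ⟩ : ∃ Q : Fin k → (Fin h → Fin n) → Prop,
      Q = fun i z => i ∈ R.1 → Hom' G (R.2.1 i) z := ⟨_, rfl⟩
  obtain ⟨g, hg⟩ : ∃ g : Fin m × Fin m → Fin n → Fin n → Prop,
      g = fun e s t => if F.Adj e.1 e.2 then G.Adj s t else ¬ G.Adj s t := ⟨_, rfl⟩
  have hcells := count_cells X Q hζ.le (by
    intro i
    by_cases hi : i ∈ R.1
    · have := hs i hi
      have h2 : Q i = Hom' G (R.2.1 i) := by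
        rw [hQ]; funext z; simp [hi]
      rw [h2]; exact this
    · have : (Fintype.piFinset (fun _ : Fin h => X i)).filter (Q i) =
          Fintype.piFinset (fun _ : Fin h => X i) := by
        rw [Finset.filter_eq_self]; intro x _; rw [hQ]; intro h; exact absurd h hi
      rw [this]
      exact mul_le_of_le_one_left (by positivity) hζ1)
  obtain ⟨Φ, hΦ⟩ : ∃ Φ : (Fin k × Fin h → Fin n) → Prop,
      Φ = fun x => ∀ i, Q i (fun a => x (i, a)) := ⟨_, rfl⟩
  have hcells' : ζ ^ k * (pi.card : ℝ) ≤ ((pi.filter Φ).card : ℝ) := by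
    refine hcells.trans (le_of_eq ?_)
    rw [hpi, hΦ]
    congr!
  set E : Finset (Fin m × Fin m) := Finset.univ.filter (fun e => e.1 < e.2 ∧ c e.1 ≠ c e.2) with hE
  have hEm : ∀ e ∈ E, e.1 < e.2 ∧ c e.1 ≠ c e.2 := fun e he => (Finset.mem_filter.1 he).2
  have hcount := count_all (fun ia : Fin k × Fin h => X ia.1) (fun ia => hX ia.1)
    Φ
    (fun e : Fin m × Fin m => (c e.1, Fin.castLE hm e.1))
    (fun e : Fin m × Fin m => (c e.2, Fin.castLE hm e.2))
    g ha0.le (by linarith) hη E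
    (by
      intro e he hh
      exact (hEm e he).2 (congrArg Prod.fst hh))
    (by
      intro e he
      rw [hΦ]
      exact sep_cells Q (hEm e he).2)
    (by
      rintro ⟨u, v⟩ he ⟨u', v'⟩ he' hne
      have h1 := (hEm _ he).1
      have h2 := (hEm _ he').1
      simp only at h1 h2
      by_contra hcon
      simp only [not_or, not_and_or, not_not, ne_eq, Prod.mk.injEq, Fin.ext_iff, Fin.val_castLE] at hcon
      apply hne
      rw [Prod.mk.injEq, Fin.ext_iff, Fin.ext_iff]
      rw [Fin.lt_def] at h1 h2
      obtain ⟨h3 | h3, h4 | h4⟩ := hcon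
      all_goals have h5 := h3.2
      all_goals have h6 := h4.2
      all_goals constructor
      all_goals omega)
    (by
      rintro ⟨u, v⟩ he
      have huv := (hEm _ he).2
      have hne : u ≠ v := fun h => huv (by simp [h])
      have hr := hreg (c u) (hc.1 u) (c v) (hc.1 v) huv
      have hcf := (hc.2 u v hne).2 huv
      have hρ' := hρ (c u) (c v)
      by_cases hadj : F.Adj u v
      · have hg2 : g (u, v) = fun s t => G.Adj s t := by rw [hg]; funext s t; simp [hadj]
        rw [hg2]
        refine lowreg_adj G hr ?_
        by_contra hlt
        rw [not_le] at hlt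
        rw [if_pos hlt] at hρ'
        have := (hcf false hρ').1 hadj
        simp at this
      · have hg2 : g (u, v) = fun s t => ¬ G.Adj s t := by rw [hg]; funext s t; simp [hadj]
        rw [hg2]
        refine lowreg_nadj G hr ?_
        by_cases hlt : dS (adjf G) (X (c u)) (X (c v)) < a
        · linarith
        · by_contra hgt
          rw [not_le] at hgt
          rw [if_neg hlt, if_pos hgt] at hρ'
          exact hadj ((hcf true hρ').2 rfl))
  have hEcard : E.card ≤ h ^ 2 := by
    calc E.card ≤ (Finset.univ : Finset (Fin m × Fin m)).card := Finset.card_le_univ _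
      _ = m ^ 2 := by simp [sq]
      _ ≤ h ^ 2 := Nat.pow_le_pow_left hm 2
  have hlow : a ^ (h ^ 2) * ζ ^ k / 2 * (pi.card : ℝ) ≤
      a ^ E.card * ((pi.filter Φ).card : ℝ) - E.card * η * (pi.card : ℝ) := by
    have h1 : a ^ (h ^ 2) ≤ a ^ E.card := pow_le_pow_of_le_one ha0.le (by linarith) hEcard
    have h2 : (E.card : ℝ) * η ≤ a ^ (h ^ 2) * ζ ^ k / 2 := by
      refine le_trans (mul_le_mul_of_nonneg_right ?_ hη) hηζ
      exact_mod_cast hEcard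
    have h3 := mul_le_mul h1 hcells' (by positivity) (by positivity)
    have h4 := mul_le_mul_of_nonneg_right h2 (show (0:ℝ) ≤ (pi.card : ℝ) by positivity)
    linarith
  refine hlow.trans (hcount.trans ?_)
  have hfin : ∀ {A B : Finset (Fin k × Fin h → Fin n)}, A ⊆ B → (A.card : ℝ) ≤ B.card := by
    intro A B hAB; exact_mod_cast Finset.card_le_card hAB
  · refine hfin ?_
    intro x hx
    replace hx := (@Finset.mem_filter _ _ (_) _ _).1 hx
    rw [Fintype.mem_piFinset] at hx
    obtain ⟨hxX, hxQ, hxE⟩ := hx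
    rw [Finset.mem_filter]
    refine ⟨Finset.mem_univ _, ?_⟩
    set φ : Fin m → Fin n := fun b => x (c b, Fin.castLE hm b) with hφ
    have hhom : ∀ b, Hom' G (R.2.1 (c b)) (fun a => x (c b, a)) := fun b => by
      rw [hΦ] at hxQ
      have h1 := hxQ (c b)
      rw [hQ] at h1
      exact h1 (hc.1 b)
    have hinj : Function.Injective φ := by
      intro b b' hbb
      by_cases hcb : c b = c b'
      · have h1 : (fun a => x (c b, a)) (Fin.castLE hm b) = (fun a => x (c b, a)) (Fin.castLE hm b') := by
          simp only [hφ] at hbb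
          rw [← hcb] at hbb
          exact hbb
        exact Fin.castLE_injective hm ((hhom b).1 h1)
      · exfalso
        have h1 := hdisj (c b) (hc.1 b) (c b') (hc.1 b') hcb
        rw [Finset.disjoint_left] at h1
        have h2 := hxX (c b, Fin.castLE hm b)
        have h3 := hxX (c b', Fin.castLE hm b')
        refine h1 h2 ?_
        simp only [hφ] at hbb
        rw [hbb]; exact h3
    refine bad_of_comap hP φ hinj ?_ _ (fun b => Finset.mem_image_of_mem _ (Finset.mem_univ _))
    have hlt : ∀ b b', b < b' → c b ≠ c b' → (G.Adj (φ b) (φ b') ↔ F.Adj b b') := by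
      intro b b' hbb hcb
      have h1 := hxE (b, b') (Finset.mem_filter.2 ⟨Finset.mem_univ _, hbb, hcb⟩)
      simp only [hg] at h1
      by_cases hadj : F.Adj b b'
      · rw [if_pos hadj] at h1; exact ⟨fun _ => hadj, fun _ => h1⟩
      · rw [if_neg hadj] at h1; exact ⟨fun h => absurd h h1, fun h => absurd h hadj⟩
    have : G.comap φ = F := by
      ext b b'
      rw [SimpleGraph.comap_adj]
      by_cases hbb : b = b'
      · subst hbb; simp
      by_cases hcb : c b = c b'
      · rw [((hc.2 b b' hbb).1 hcb)]
        rw [← (hhom b).2 (Fin.castLE hm b) (Fin.castLE hm b') (fun h => hbb (Fin.castLE_injective hm h))]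
        simp only [hφ]
        rw [← hcb]
      · rcases lt_or_gt_of_ne hbb with hl | hl
        · exact hlt b b' hl hcb
        · rw [G.adj_comm, F.adj_comm]
          exact hlt b' b hl (Ne.symm hcb)
    rw [this]; exact hF

lemma symm_card {n : ℕ} (G H : SimpleGraph (Fin n)) :
    ((G.edgeFinset ∆ H.edgeFinset).card : ℝ) ≤
      ∑ u, ∑ v, if (G.Adj u v ↔ H.Adj u v) then (0 : ℝ) else 1 := by
  have h1 : G.edgeFinset ∆ H.edgeFinset ⊆ ((Finset.univ : Finset (Fin n × Fin n)).filter
      (fun e => ¬ (G.Adj e.1 e.2 ↔ H.Adj e.1 e.2))).image (fun e => s(e.1, e.2)) := by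
    intro e he
    induction e using Sym2.ind with
    | _ u v =>
      rw [Finset.mem_symmDiff, SimpleGraph.mem_edgeFinset, SimpleGraph.mem_edgeFinset,
        SimpleGraph.mem_edgeSet, SimpleGraph.mem_edgeSet] at he
      refine Finset.mem_image.2 ⟨(u, v), ?_, rfl⟩
      rw [Finset.mem_filter]
      exact ⟨Finset.mem_univ _, by simp only; tauto⟩
  have h2 := (Finset.card_le_card h1).trans Finset.card_image_le
  have h3 : (((Finset.univ : Finset (Fin n × Fin n)).filter
      (fun e => ¬ (G.Adj e.1 e.2 ↔ H.Adj e.1 e.2))).card : ℝ) =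
      ∑ u, ∑ v, if (G.Adj u v ↔ H.Adj u v) then (0 : ℝ) else 1 := by
    rw [Finset.card_filter, ← Fintype.sum_prod_type']
    push_cast
    refine Finset.sum_congr rfl fun e _ => ?_
    by_cases h : (G.Adj e.1 e.2 ↔ H.Adj e.1 e.2) <;> simp [h]
  rw [← h3]; exact_mod_cast h2

lemma edit_bound {n k : ℕ} (G H : SimpleGraph (Fin n)) (p : Fin n → Fin k) (sg : Finset (Fin k))
    {a : ℝ} (ha : 0 < a) (ha2 : a < 1/2) (d : Fin k → Fin k → ℝ)
    (hH : ∀ u v, p u ∈ sg → p v ∈ sg → p u ≠ p v → (d (p u) (p v) < a → G.Adj u v → False) →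
      (1 - a < d (p u) (p v) → ¬ G.Adj u v → False) → (G.Adj u v ↔ H.Adj u v))
    (h1 : (((Finset.univ : Finset (Fin n)).filter (fun u => p u ∉ sg)).card : ℝ) ≤ a * n)
    (h2 : ∀ u, ((cl p u).card : ℝ) ≤ 2 * a * n)
    (h3 : ∑ u, ∑ v, (if p u ∈ sg ∧ p v ∈ sg ∧ p u ≠ p v then
      (d (p u) (p v) - av (adjf G) p u v) ^ 2 else 0) ≤ a ^ 2 * (n : ℝ) ^ 2) :
    ((G.edgeFinset ∆ H.edgeFinset).card : ℝ) ≤ 7 * a * (n : ℝ) ^ 2 := by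
  refine (symm_card G H).trans ?_
  set f := adjf G with hf
  set χ : Fin n → Fin n → ℝ := fun u v => if p u ∈ sg ∧ p v ∈ sg ∧ p u ≠ p v then
    (if d (p u) (p v) < a then 1 else if 1 - a < d (p u) (p v) then -1 else 0) else 0 with hχ
  set ψ : Fin n → Fin n → ℝ := fun u v => if p u ∈ sg ∧ p v ∈ sg ∧ p u ≠ p v then
    (if d (p u) (p v) < a then 0 else if 1 - a < d (p u) (p v) then 1 else 0) else 0 with hψ
  have hproj := proj f p χ (by
    intro u u' v v' hu hv
    simp only [hχ, hu, hv])
  -- pointwise bound on the number of edits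
  have hpt : ∀ u v, (if (G.Adj u v ↔ H.Adj u v) then (0 : ℝ) else 1) ≤
      ((if p u ∉ sg then (1 : ℝ) else 0) + (if p v ∉ sg then (1 : ℝ) else 0)) +
        ((if p v = p u then (1 : ℝ) else 0) + (f u v * χ u v + ψ u v)) := by
    intro u v
    have hfz : 0 ≤ f u v * χ u v + ψ u v := by
      simp only [hf, adjf, hχ, hψ]
      split_ifs <;> norm_num
    by_cases hu : p u ∈ sg
    swap
    · rw [if_pos hu]
      have e1 : (if (G.Adj u v ↔ H.Adj u v) then (0 : ℝ) else 1) ≤ 1 := by split_ifs <;> norm_num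
      have e2 : 0 ≤ (if p v ∉ sg then (1 : ℝ) else 0) := by split_ifs <;> norm_num
      have e3 : 0 ≤ (if p v = p u then (1 : ℝ) else 0) := by split_ifs <;> norm_num
      linarith
    by_cases hv : p v ∈ sg
    swap
    · rw [if_pos hv]
      have e1 : (if (G.Adj u v ↔ H.Adj u v) then (0 : ℝ) else 1) ≤ 1 := by split_ifs <;> norm_num
      have e2 : 0 ≤ (if p u ∉ sg then (1 : ℝ) else 0) := by split_ifs <;> norm_num
      have e3 : 0 ≤ (if p v = p u then (1 : ℝ) else 0) := by split_ifs <;> norm_num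
      linarith
    by_cases huv : p v = p u
    · rw [if_pos huv]
      have e1 : (if (G.Adj u v ↔ H.Adj u v) then (0 : ℝ) else 1) ≤ 1 := by split_ifs <;> norm_num
      have e2 : 0 ≤ (if p u ∉ sg then (1 : ℝ) else 0) := by split_ifs <;> norm_num
      have e3 : 0 ≤ (if p v ∉ sg then (1 : ℝ) else 0) := by split_ifs <;> norm_num
      linarith
    have huv' : p u ≠ p v := fun h => huv h.symm
    have hh := hH u v hu hv huv'
    by_cases hagree : (G.Adj u v ↔ H.Adj u v)
    · rw [if_pos hagree]
      have e1 : 0 ≤ (if p u ∉ sg then (1 : ℝ) else 0) := by split_ifs <;> norm_num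
      have e2 : 0 ≤ (if p v ∉ sg then (1 : ℝ) else 0) := by split_ifs <;> norm_num
      have e3 : 0 ≤ (if p v = p u then (1 : ℝ) else 0) := by split_ifs <;> norm_num
      linarith
    · have e4 : f u v * χ u v + ψ u v = 1 := by
        simp only [hf, adjf, hχ, hψ, hu, hv, huv', ne_eq, not_false_eq_true, and_self, if_true]
        by_cases hadj : G.Adj u v
        · by_cases hlt : d (p u) (p v) < a
          · simp [hadj, hlt]
          · exact absurd (hh (fun h => absurd h hlt) (fun _ h => h hadj)) hagree
        · by_cases hlt : 1 - a < d (p u) (p v)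
          · have : ¬ d (p u) (p v) < a := by linarith
            simp [hadj, hlt, this]
          · exact absurd (hh (fun _ h => hadj h) (fun h => absurd h hlt)) hagree
      rw [if_neg hagree, e4]
      have e1 : 0 ≤ (if p u ∉ sg then (1 : ℝ) else 0) := by split_ifs <;> norm_num
      have e2 : 0 ≤ (if p v ∉ sg then (1 : ℝ) else 0) := by split_ifs <;> norm_num
      have e3 : 0 ≤ (if p v = p u then (1 : ℝ) else 0) := by split_ifs <;> norm_num
      linarith
  -- bound on the averaged cross term
  have hav : ∀ u v, av f p u v * χ u v + ψ u v ≤ 2 * a + (1 / a) *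
      (if p u ∈ sg ∧ p v ∈ sg ∧ p u ≠ p v then (d (p u) (p v) - av f p u v) ^ 2 else 0) := by
    intro u v
    by_cases hc : p u ∈ sg ∧ p v ∈ sg ∧ p u ≠ p v
    · simp only [hχ, hψ, if_pos hc]
      set D := d (p u) (p v)
      set A := av f p u v
      have hq : ∀ t : ℝ, t ≤ a + (1 / a) * t ^ 2 := by
        intro t
        have h0 : 0 ≤ (1 / a) * (a - t / 2) ^ 2 + (1 / a) * (3 / 4 * t ^ 2) := by positivity
        have h4 : (1 / a) * (a - t / 2) ^ 2 + (1 / a) * (3 / 4 * t ^ 2) = a + (1 / a) * t ^ 2 - t := by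
          field_simp; ring
        linarith
      by_cases hlt : D < a
      · simp only [if_pos hlt]
        have h5 := hq (A - D)
        have h6 : (A - D) ^ 2 = (D - A) ^ 2 := by ring
        rw [h6] at h5
        linarith
      · simp only [if_neg hlt]
        by_cases hgt : 1 - a < D
        · simp only [if_pos hgt]
          have h5 := hq (D - A)
          linarith
        · simp only [if_neg hgt]
          have : 0 ≤ (1 / a) * (D - A) ^ 2 := by positivity
          linarith
    · simp only [hχ, hψ, if_neg hc]; linarith
  have s1 : ∑ u : Fin n, ∑ v : Fin n, (if p u ∉ sg then (1 : ℝ) else 0) ≤ a * (n : ℝ) ^ 2 := by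
    have e : ∑ u : Fin n, ∑ v : Fin n, (if p u ∉ sg then (1 : ℝ) else 0) =
        n * (((Finset.univ : Finset (Fin n)).filter (fun u => p u ∉ sg)).card : ℝ) := by
      rw [Finset.card_filter]; push_cast
      rw [Finset.mul_sum]
      refine Finset.sum_congr rfl fun u _ => ?_
      simp
    rw [e]
    have := mul_le_mul_of_nonneg_left h1 (Nat.cast_nonneg (α := ℝ) n)
    linarith
  have s2 : ∑ u : Fin n, ∑ v : Fin n, (if p v ∉ sg then (1 : ℝ) else 0) ≤ a * (n : ℝ) ^ 2 := by
    rw [Finset.sum_comm]; exact s1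
  have s3 : ∑ u : Fin n, ∑ v : Fin n, (if p v = p u then (1 : ℝ) else 0) ≤ 2 * a * (n : ℝ) ^ 2 := by
    calc ∑ u : Fin n, ∑ v : Fin n, (if p v = p u then (1 : ℝ) else 0)
        ≤ ∑ u : Fin n, 2 * a * (n : ℝ) := by
          refine Finset.sum_le_sum fun u _ => ?_
          have := h2 u
          rw [cl, Finset.card_filter] at this
          push_cast at this
          exact this
      _ = 2 * a * (n : ℝ) ^ 2 := by simp; ring
  have s4 : ∑ u : Fin n, ∑ v : Fin n, (f u v * χ u v + ψ u v) ≤ 3 * a * (n : ℝ) ^ 2 := by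
    have e : ∑ u : Fin n, ∑ v : Fin n, (f u v * χ u v + ψ u v) =
        ∑ u : Fin n, ∑ v : Fin n, (av f p u v * χ u v + ψ u v) := by
      simp only [Finset.sum_add_distrib]
      rw [hproj]
    rw [e]
    calc ∑ u : Fin n, ∑ v : Fin n, (av f p u v * χ u v + ψ u v)
        ≤ ∑ u : Fin n, ∑ v : Fin n, (2 * a + (1 / a) *
      (if p u ∈ sg ∧ p v ∈ sg ∧ p u ≠ p v then (d (p u) (p v) - av f p u v) ^ 2 else 0)) :=
          Finset.sum_le_sum fun u _ => Finset.sum_le_sum fun v _ => hav u v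
      _ = 2 * a * (n : ℝ) ^ 2 + (1 / a) * ∑ u, ∑ v, (if p u ∈ sg ∧ p v ∈ sg ∧ p u ≠ p v then
      (d (p u) (p v) - av f p u v) ^ 2 else 0) := by
          simp only [Finset.sum_add_distrib, ← Finset.mul_sum]
          simp; ring
      _ ≤ 2 * a * (n : ℝ) ^ 2 + (1 / a) * (a ^ 2 * (n : ℝ) ^ 2) := by
          have := mul_le_mul_of_nonneg_left h3 (show 0 ≤ 1 / a by positivity)
          linarith
      _ = 3 * a * (n : ℝ) ^ 2 := by field_simp; ring
  calc ∑ u, ∑ v, (if (G.Adj u v ↔ H.Adj u v) then (0 : ℝ) else 1)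
      ≤ ∑ u, ∑ v, (((if p u ∉ sg then (1 : ℝ) else 0) + (if p v ∉ sg then (1 : ℝ) else 0)) +
        ((if p v = p u then (1 : ℝ) else 0) + (f u v * χ u v + ψ u v))) :=
        Finset.sum_le_sum fun u _ => Finset.sum_le_sum fun v _ => hpt u v
    _ = (∑ u : Fin n, ∑ v : Fin n, (if p u ∉ sg then (1 : ℝ) else 0)) +
        (∑ u : Fin n, ∑ v : Fin n, (if p v ∉ sg then (1 : ℝ) else 0)) +
        ((∑ u : Fin n, ∑ v : Fin n, (if p v = p u then (1 : ℝ) else 0)) +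
        ∑ u : Fin n, ∑ v : Fin n, (f u v * χ u v + ψ u v)) := by
        simp only [Finset.sum_add_distrib]
    _ ≤ 7 * a * (n : ℝ) ^ 2 := by linarith

lemma dS_adjf_comm {n : ℕ} (G : SimpleGraph (Fin n)) (A B : Finset (Fin n)) :
    dS (adjf G) A B = dS (adjf G) B A := by
  have : eS (adjf G) A B = eS (adjf G) B A := by
    rw [eS, eS, Finset.sum_comm]
    refine Finset.sum_congr rfl fun s _ => Finset.sum_congr rfl fun t _ => ?_
    simp only [adjf, G.adj_comm]
  rw [dS, dS, this, mul_comm (A.card : ℝ)]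

lemma nonsig {n k : ℕ} (hn : 0 < n) (p : Fin n → Fin k) {a : ℝ} (ha : 0 < a) :
    (((Finset.univ : Finset (Fin n)).filter (fun u => p u ∉ sig a p)).card : ℝ) ≤ a * n := by
  have hk : 0 < k := lt_of_le_of_lt (Nat.zero_le _) (p ⟨0, hn⟩).2
  have hk' : (0 : ℝ) < k := by exact_mod_cast hk
  have h1 := Finset.card_eq_sum_card_fiberwise (f := p)
    (s := (Finset.univ : Finset (Fin n)).filter (fun u => p u ∉ sig a p)) (t := (sig a p)ᶜ) (by
      intro u hu
      simpa using hu)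
  have h2 : (((Finset.univ : Finset (Fin n)).filter (fun u => p u ∉ sig a p)).card : ℝ) ≤
      ∑ i ∈ (sig a p)ᶜ, ((cell p i).card : ℝ) := by
    rw [h1]; push_cast
    refine Finset.sum_le_sum fun i _ => ?_
    have : ((Finset.univ : Finset (Fin n)).filter (fun u => p u ∉ sig a p)).filter (fun u => p u = i) ⊆
        cell p i := by
      intro u hu
      rw [cell, Finset.mem_filter]
      exact ⟨Finset.mem_univ _, (Finset.mem_filter.1 hu).2⟩
    exact_mod_cast Finset.card_le_card this
  have h3 : (k : ℝ) * ∑ i ∈ (sig a p)ᶜ, ((cell p i).card : ℝ) ≤ k * (a * n) := by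
    rw [Finset.mul_sum]
    calc ∑ i ∈ (sig a p)ᶜ, (k : ℝ) * ((cell p i).card : ℝ) ≤ ∑ i ∈ (sig a p)ᶜ, a * (n : ℝ) := by
          refine Finset.sum_le_sum fun i hi => ?_
          rw [Finset.mem_compl, sig, Finset.mem_filter] at hi
          simp only [Finset.mem_univ, true_and, not_le] at hi
          exact hi.le
      _ = ((sig a p)ᶜ.card : ℝ) * (a * n) := by simp
      _ ≤ k * (a * n) := by
          refine mul_le_mul_of_nonneg_right ?_ (by positivity)
          have := Finset.card_le_univ (sig a p)ᶜ
          rw [Fintype.card_fin] at this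
          exact_mod_cast this
  exact h2.trans (le_of_mul_le_mul_left h3 hk')

lemma one_scale {P : ∀ n : ℕ, Set (SimpleGraph (Fin n))} (hP : IsHereditary P) {a : ℝ} (ha : 0 < a)
    (ha2 : a < 1/2) {k k' h N : ℕ} {η ζ β : ℝ}
    (hpat : ∀ R : Finset (Fin k) × (Fin k → Bool) × (Fin k → Fin k → Option Bool),
      (∃ (n : ℕ) (H : SimpleGraph (Fin n)) (c : Fin n → Fin k), H ∉ P n ∧ Conf R H c) →
      ∃ m ≤ h, ∃ (F : SimpleGraph (Fin m)) (c : Fin m → Fin k), F ∉ P m ∧ Conf R F c)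
    (hζ : 0 < ζ) (hζ1 : ζ ≤ 1)
    (hsup : ∀ (n : ℕ) (G : SimpleGraph (Fin n)) (X : Finset (Fin n)), N ≤ X.card → ∃ s : Bool,
      ζ * ((Fintype.piFinset (fun _ : Fin h => X)).card : ℝ) ≤
        (((Fintype.piFinset (fun _ : Fin h => X)).filter (Hom' G s)).card : ℝ))
    (hη : 0 < η) (hηγ : 4 * η * (k : ℝ) ^ 2 ≤ a ^ 2)
    (hηζ : (h : ℝ) ^ 2 * η ≤ a ^ (h ^ 2) * ζ ^ k / 2)
    (hβ0 : 0 < β) (hβ1 : β ≤ 1) (hβ : 4 * k * k' * β ≤ a)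
    {n : ℕ} (hn : 0 < n) (hN : (N : ℝ) ≤ β * n) (G : SimpleGraph (Fin n))
    (hfar : ∀ G' : SimpleGraph (Fin n), G' ∈ P n →
            8 * a * (n : ℝ) ^ 2 ≤ ((G.edgeFinset ∆ G'.edgeFinset).card : ℝ))
    (p : Fin n → Fin k) (q : Fin n → Fin k') (hqp : Refines q p)
    (hcl : ∀ u, ((cl p u).card : ℝ) ≤ 2 * a * n)
    (hirr : irr (adjf G) η q ≤ η * (n : ℝ) ^ 2)
    (hen : en (adjf G) q - en (adjf G) p ≤ a ^ 2 / 4 * (n : ℝ) ^ 2) :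
    β ^ (k * h) * (a ^ (h ^ 2) * ζ ^ k / 2) * (n : ℝ) ^ (Fintype.card (Fin k × Fin h)) ≤
      (((Finset.univ : Finset (Fin k × Fin h → Fin n)).filter
        (fun x => inducedCopy G (Finset.univ.image x) ∉ P (Finset.univ.image x).card)).card : ℝ) := by
  have hn' : (0 : ℝ) < n := by exact_mod_cast hn
  obtain ⟨y, hy1, hy2, hy3, hy4⟩ := select hn (adjf G) p q hqp ha (by positivity) hirr hen hηγ hβ0 hβ
  have hns := nonsig hn p ha
  set sg := sig a p with hsg
  obtain ⟨i0, hi0⟩ : ∃ i0, i0 ∈ sg := by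
    by_contra hcon
    push Not at hcon
    have : (Finset.univ : Finset (Fin n)).filter (fun u => p u ∉ sg) = Finset.univ := by
      rw [Finset.filter_eq_self]; intro u _; exact hcon _
    rw [this, Finset.card_univ, Fintype.card_fin] at hns
    nlinarith
  set X : Fin k → Finset (Fin n) := fun i => if i ∈ sg then cl q (y i) else Finset.univ with hX
  have hXs : ∀ i ∈ sg, X i = cl q (y i) := fun i hi => by simp only [hX, if_pos hi]
  have hXc : ∀ i, β * n ≤ ((X i).card : ℝ) := by
    intro i
    by_cases hi : i ∈ sg
    · rw [hXs i hi]; exact hy2 i hi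
    · simp only [hX, if_neg hi, Finset.card_univ, Fintype.card_fin]
      exact mul_le_of_le_one_left hn'.le hβ1
  have hXne : ∀ i, (X i).Nonempty := by
    intro i
    rw [← Finset.card_pos]
    have := lt_of_lt_of_le (mul_pos hβ0 hn') (hXc i)
    exact_mod_cast this
  have hs : ∀ i, ∃ s : Bool, ζ * ((Fintype.piFinset (fun _ : Fin h => X i)).card : ℝ) ≤
        (((Fintype.piFinset (fun _ : Fin h => X i)).filter (Hom' G s)).card : ℝ) := by
    intro i
    refine hsup n G (X i) ?_
    exact_mod_cast hN.trans (hXc i)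
  choose s hs using hs
  set d : Fin k → Fin k → ℝ := fun i j => dS (adjf G) (X i) (X j) with hd
  have hdsymm : ∀ i j, d i j = d j i := fun i j => dS_adjf_comm G _ _
  set ρ : Fin k → Fin k → Option Bool := fun i j => if d i j < a then some false else
      if 1 - a < d i j then some true else none with hρ
  have hρsymm : ∀ i j, ρ i j = ρ j i := fun i j => by simp only [hρ, hdsymm i j]
  set c : Fin n → Fin k := fun u => if p u ∈ sg then p u else i0 with hc
  let H : SimpleGraph (Fin n) :=
    { Adj := fun u v => u ≠ v ∧ ((c u = c v ∧ s (c u) = true) ∨ (c u ≠ c v ∧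
        (ρ (c u) (c v) = some true ∨ (ρ (c u) (c v) = none ∧ G.Adj u v))))
      symm := ⟨by
        rintro u v ⟨h1, h2⟩
        refine ⟨h1.symm, ?_⟩
        rcases h2 with ⟨h2, h3⟩ | ⟨h2, h3⟩
        · exact Or.inl ⟨h2.symm, h2 ▸ h3⟩
        · refine Or.inr ⟨Ne.symm h2, ?_⟩
          rw [hρsymm, G.adj_comm]
          exact h3⟩
      loopless := ⟨fun u h => h.1 rfl⟩ }
  have hHadj : ∀ u v, H.Adj u v ↔ u ≠ v ∧ ((c u = c v ∧ s (c u) = true) ∨ (c u ≠ c v ∧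
        (ρ (c u) (c v) = some true ∨ (ρ (c u) (c v) = none ∧ G.Adj u v)))) := fun u v => Iff.rfl
  have hconf : Conf (sg, s, ρ) H c := by
    refine ⟨?_, ?_⟩
    · intro u
      simp only [hc]
      split_ifs with hu
      · exact hu
      · exact hi0
    · intro u v huv
      refine ⟨fun hcc => ?_, fun hcc b hb => ?_⟩
      · rw [hHadj]
        constructor
        · rintro ⟨_, ⟨_, h3⟩ | ⟨h2, _⟩⟩
          · exact h3
          · exact absurd hcc h2
        · intro h3; exact ⟨huv, Or.inl ⟨hcc, h3⟩⟩
      · rw [hHadj]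
        simp only at hb
        constructor
        · rintro ⟨_, ⟨h2, _⟩ | ⟨_, h3 | ⟨h3, _⟩⟩⟩
          · exact absurd h2 hcc
          · rw [h3] at hb; exact (Option.some.inj hb).symm
          · rw [h3] at hb; cases hb
        · intro h3
          subst h3
          exact ⟨huv, Or.inr ⟨hcc, Or.inl hb⟩⟩
  have hedit := edit_bound G H p sg ha ha2 d (by
      intro u v hu hv huv hl hg
      have hne : u ≠ v := fun h => huv (by rw [h])
      have hcu : c u = p u := by simp only [hc, if_pos hu]
      have hcv : c v = p v := by simp only [hc, if_pos hv]
      rw [hHadj, hcu, hcv]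
      constructor
      · intro hadj
        refine ⟨hne, Or.inr ⟨huv, ?_⟩⟩
        have h1 : ¬ d (p u) (p v) < a := fun h => hl h hadj
        by_cases h2 : 1 - a < d (p u) (p v)
        · left; simp only [hρ, if_neg h1, if_pos h2]
        · right; exact ⟨by simp only [hρ, if_neg h1, if_neg h2], hadj⟩
      · rintro ⟨_, ⟨h2, _⟩ | ⟨_, h3 | ⟨_, h3⟩⟩⟩
        · exact absurd h2 huv
        · by_contra hadj
          have h1 : ¬ 1 - a < d (p u) (p v) := fun h => hg h hadj
          simp only [hρ, if_neg h1] at h3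
          split_ifs at h3
          cases h3
        · exact h3) hns hcl (by
      refine le_trans (le_of_eq ?_) (hy4.trans (le_of_eq ?_))
      · refine Finset.sum_congr rfl fun u _ => Finset.sum_congr rfl fun v _ => ?_
        by_cases hcond : p u ∈ sg ∧ p v ∈ sg ∧ p u ≠ p v
        · rw [if_pos hcond, if_pos hcond]
          simp only [hd, hXs _ hcond.1, hXs _ hcond.2.1]
          rfl
        · rw [if_neg hcond, if_neg hcond]
      · ring)
  have hHP : H ∉ P n := by
    intro hH
    have h1 := hfar H hH
    have : 0 < a * (n : ℝ) ^ 2 := by positivity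
    linarith
  obtain ⟨m, hm, F, c', hF, hFc⟩ := hpat (sg, s, ρ) ⟨n, H, c, hHP, hconf⟩
  have hcount := count_bad hP G ha ha2.le hη.le hζ hζ1 hηζ X hXne (sg, s, ρ) (by
      intro i hi j hj hij
      rw [hXs i hi, hXs j hj, Finset.disjoint_left]
      intro w hw hw'
      rw [mem_cl] at hw hw'
      apply hij
      rw [← hy1 i hi, ← hy1 j hj]
      exact hqp _ _ (hw.symm.trans hw')) (by
      intro i hi j hj hij
      rw [hXs i hi, hXs j hj]
      exact hy3 i hi j hj hij) (fun i _ => hs i) (fun i j => rfl) hm F hF c' hFc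
  refine le_trans ?_ hcount
  have hpi : (β * n) ^ (k * h) ≤ ((Fintype.piFinset (fun ia : Fin k × Fin h => X ia.1)).card : ℝ) := by
    rw [Fintype.card_piFinset]
    push_cast
    calc (β * n) ^ (k * h) = ∏ _ia : Fin k × Fin h, (β * (n : ℝ)) := by simp
      _ ≤ _ := Finset.prod_le_prod (fun _ _ => by positivity) fun ia _ => hXc ia.1
  have hcard : Fintype.card (Fin k × Fin h) = k * h := by simp
  rw [hcard]
  calc β ^ (k * h) * (a ^ (h ^ 2) * ζ ^ k / 2) * (n : ℝ) ^ (k * h)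
      = (a ^ (h ^ 2) * ζ ^ k / 2) * (β * n) ^ (k * h) := by rw [mul_pow]; ring
    _ ≤ _ := mul_le_mul_of_nonneg_left hpi (by positivity)

lemma mod_class {n m : ℕ} (hm : 0 < m) (u : Fin n) :
    ((Finset.univ : Finset (Fin n)).filter (fun v => v.1 % m = u.1 % m)).card ≤ n / m + 1 := by
  rw [← Finset.card_range (n / m + 1)]
  refine Finset.card_le_card_of_injOn (fun v => v.1 / m) ?_ ?_
  · intro v _
    simp only [Finset.coe_range, Set.mem_Iio]
    exact Nat.lt_succ_of_le (Nat.div_le_div_right v.2.le)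
  · intro v hv w hw hvw
    have h1 : v.1 % m = u.1 % m := (Finset.mem_filter.1 hv).2
    have h2 : w.1 % m = u.1 % m := (Finset.mem_filter.1 hw).2
    simp only at hvw
    apply Fin.ext
    rw [← Nat.div_add_mod v.1 m, ← Nat.div_add_mod w.1 m, hvw, h1, h2]

lemma testable {P : ∀ n : ℕ, Set (SimpleGraph (Fin n))} (hP : IsHereditary P) (ε : ℝ) (hε : 0 < ε) :
    ∃ kε : ℕ, 1 ≤ kε ∧
        ∀ (n : ℕ) (G : SimpleGraph (Fin n)),
          (∀ G' : SimpleGraph (Fin n), G' ∈ P n →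
            ε * (n : ℝ) ^ 2 ≤ ((G.edgeFinset ∆ G'.edgeFinset).card : ℝ)) →
          ∀ k : ℕ, kε ≤ k → k ≤ n →
            (((Finset.powersetCard k (Finset.univ : Finset (Fin n))).filter
                (fun S : Finset (Fin n) => inducedCopy G S ∈ P S.card)).card : ℝ) ≤
              (1/3 : ℝ) * ((Finset.powersetCard k (Finset.univ : Finset (Fin n))).card : ℝ) := by
  set a : ℝ := min ε 1 / 8 with hadef
  have ha : 0 < a := by rw [hadef]; have := lt_min hε one_pos; positivity
  have ha8 : 8 * a ≤ ε := by rw [hadef]; linarith [min_le_left ε 1]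
  have ha1 : a ≤ 1 / 8 := by rw [hadef]; linarith [min_le_right ε 1]
  choose h hpat using pat_bound P
  choose ζ N hζ hζ1 hsup using supersat
  obtain ⟨M, hM⟩ := exists_nat_gt (1 / a)
  have hM0 : (0 : ℝ) < M := lt_trans (by positivity) hM
  have hM0' : 0 < M := by exact_mod_cast hM0
  set η : ℕ → ℝ := fun k => min (a ^ 2 / (4 * ((k : ℝ) ^ 2 + 1)))
    (a ^ (h k ^ 2) * ζ (h k) ^ k / 2 / ((h k : ℝ) ^ 2 + 1)) with hη
  have hηpos : ∀ k, 0 < η k := by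
    intro k
    have := hζ (h k)
    simp only [hη]
    exact lt_min (by positivity) (by positivity)
  have hη1 : ∀ k : ℕ, 4 * η k * (k : ℝ) ^ 2 ≤ a ^ 2 := by
    intro k
    have h1 : η k ≤ a ^ 2 / (4 * ((k : ℝ) ^ 2 + 1)) := min_le_left _ _
    rw [le_div_iff₀ (by positivity)] at h1
    have := hηpos k
    nlinarith
  have hη2 : ∀ k : ℕ, (h k : ℝ) ^ 2 * η k ≤ a ^ (h k ^ 2) * ζ (h k) ^ k / 2 := by
    intro k
    have h1 : η k ≤ a ^ (h k ^ 2) * ζ (h k) ^ k / 2 / ((h k : ℝ) ^ 2 + 1) := min_le_right _ _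
    rw [le_div_iff₀ (by positivity)] at h1
    have := hηpos k
    nlinarith
  obtain ⟨T, κ, hstrong⟩ := strong η hηpos (a ^ 2 / 4) (by positivity) M
  set β : ℕ → ℝ := fun i => a / (4 * κ i * κ (i + 1) + 1) with hβ
  have hβpos : ∀ i, 0 < β i := fun i => by simp only [hβ]; positivity
  have hβ1 : ∀ i, β i ≤ 1 := fun i => by
    simp only [hβ]
    rw [div_le_one (by positivity)]
    have : (0 : ℝ) ≤ 4 * κ i * κ (i + 1) := by positivity
    linarith
  have hβ2 : ∀ i, 4 * (κ i : ℝ) * κ (i + 1) * β i ≤ a := fun i => by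
    have h1 : β i * (4 * κ i * κ (i + 1) + 1) = a := by
      simp only [hβ]; field_simp
    have := hβpos i
    linarith
  have hsamp : ∀ i, ∃ kε : ℕ, 1 ≤ kε ∧ ∀ (n : ℕ) (B : Finset (Fin n) → Prop),
      (∀ S T, S ⊆ T → B S → B T) →
      β i ^ (κ i * h (κ i)) * (a ^ (h (κ i) ^ 2) * ζ (h (κ i)) ^ (κ i) / 2) *
        (n : ℝ) ^ (Fintype.card (Fin (κ i) × Fin (h (κ i)))) ≤
        (((Finset.univ : Finset (Fin (κ i) × Fin (h (κ i)) → Fin n)).filter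
          (fun x => B (Finset.univ.image x))).card : ℝ) →
      ∀ k, kε ≤ k → k ≤ n →
        (((Finset.powersetCard k (Finset.univ : Finset (Fin n))).filter (fun S => ¬ B S)).card : ℝ) ≤
          (1/3 : ℝ) * ((Finset.powersetCard k (Finset.univ : Finset (Fin n))).card : ℝ) := by
    intro i
    refine sampling _ _ ?_
    have h1 := hβpos i
    have h2 := hζ (h (κ i))
    positivity
  choose ks hks1 hks using hsamp
  refine ⟨1 + M + ∑ i ∈ Finset.range T, (ks i + ⌈(N (h (κ i)) : ℝ) / β i⌉₊), by omega, ?_⟩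
  intro n G hfar k hk hkn
  have hn : 0 < n := by omega
  have hn' : (0 : ℝ) < n := by exact_mod_cast hn
  obtain ⟨i, hi, p, q, hpp0, hqp, hirr, hen⟩ := hstrong n (adjf G)
    (fun u v => by simp only [adjf]; split_ifs <;> norm_num)
    (fun u v => by simp only [adjf]; split_ifs <;> norm_num) hn
    (fun x => ⟨x.1 % M, Nat.mod_lt _ hM0'⟩)
  have hle : ks i + ⌈(N (h (κ i)) : ℝ) / β i⌉₊ ≤
      ∑ i ∈ Finset.range T, (ks i + ⌈(N (h (κ i)) : ℝ) / β i⌉₊) :=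
    Finset.single_le_sum (f := fun i => ks i + ⌈(N (h (κ i)) : ℝ) / β i⌉₊)
      (fun _ _ => Nat.zero_le _) (Finset.mem_range.2 hi)
  have hNn : (N (h (κ i)) : ℝ) ≤ β i * n := by
    have h1 : ⌈(N (h (κ i)) : ℝ) / β i⌉₊ ≤ n := by omega
    have h2 : (N (h (κ i)) : ℝ) / β i ≤ n := Nat.ceil_le.1 h1
    rw [div_le_iff₀ (hβpos i)] at h2
    linarith
  have hMn : (M : ℝ) ≤ n := by
    have : M ≤ n := by omega
    exact_mod_cast this
  have haM : 1 < a * M := by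
    rw [div_lt_iff₀ ha] at hM
    linarith
  have hcl : ∀ u, ((cl p u).card : ℝ) ≤ 2 * a * n := by
    intro u
    have h1 : cl p u ⊆ (Finset.univ : Finset (Fin n)).filter (fun v => v.1 % M = u.1 % M) := by
      intro v hv
      rw [mem_cl] at hv
      rw [Finset.mem_filter]
      exact ⟨Finset.mem_univ _, congrArg Fin.val (hpp0 v u hv)⟩
    have h2 : (cl p u).card ≤ n / M + 1 := (Finset.card_le_card h1).trans (mod_class hM0' u)
    have h3 : ((n / M : ℕ) : ℝ) ≤ (n : ℝ) / M := Nat.cast_div_le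
    have h4 : (n : ℝ) / M ≤ a * n := by
      rw [div_le_iff₀ hM0]
      nlinarith
    have h5 : 1 ≤ a * n := by nlinarith
    have h6 : ((cl p u).card : ℝ) ≤ ((n / M : ℕ) : ℝ) + 1 := by exact_mod_cast h2
    linarith
  have hmain := one_scale hP ha (by linarith) (hpat (κ i)) (hζ (h (κ i))) (hζ1 (h (κ i)))
    (hsup (h (κ i))) (hηpos (κ i)) (hη1 (κ i)) (hη2 (κ i)) (hβpos i) (hβ1 i) (hβ2 i) hn hNn G (by
      intro G' hG'
      refine le_trans ?_ (hfar G' hG')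
      exact mul_le_mul_of_nonneg_right ha8 (by positivity)) p q hqp hcl hirr hen
  have hres := hks i n (fun S => inducedCopy G S ∉ P S.card)
    (fun S T hST hb => bad_mono hP hST hb) (by
      refine hmain.trans (le_of_eq ?_)
      congr!) k (by omega) hkn
  refine le_trans (le_of_eq ?_) hres
  congr 2
  ext S
  simp

/-- Alon–Shapira theorem: every hereditary graph property is testable. -/
theorem alon_shapira (P : ∀ n : ℕ, Set (SimpleGraph (Fin n))) (hP : IsHereditary P) :
    ∃ P' : ∀ n : ℕ, Set (SimpleGraph (Fin n)),
      (∀ (n : ℕ) (G : SimpleGraph (Fin n)), G ∈ P n →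
        ∀ k : ℕ, 1 ≤ k → k ≤ n →
          (2/3 : ℝ) * ((Finset.powersetCard k (Finset.univ : Finset (Fin n))).card : ℝ) ≤
            (((Finset.powersetCard k (Finset.univ : Finset (Fin n))).filter
              (fun S : Finset (Fin n) => inducedCopy G S ∈ P' S.card)).card : ℝ)) ∧
      (∀ ε : ℝ, 0 < ε → ∃ kε : ℕ, 1 ≤ kε ∧
        ∀ (n : ℕ) (G : SimpleGraph (Fin n)),
          (∀ G' : SimpleGraph (Fin n), G' ∈ P n →
            ε * (n : ℝ) ^ 2 ≤ ((G.edgeFinset ∆ G'.edgeFinset).card : ℝ)) →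
          ∀ k : ℕ, kε ≤ k → k ≤ n →
            (((Finset.powersetCard k (Finset.univ : Finset (Fin n))).filter
                (fun S : Finset (Fin n) => inducedCopy G S ∈ P' S.card)).card : ℝ) ≤
              (1/3 : ℝ) * ((Finset.powersetCard k (Finset.univ : Finset (Fin n))).card : ℝ)) := by
  refine ⟨P, fun n G hG k _ _ => ?_, fun ε hε => testable hP ε hε⟩
  have h1 : (Finset.powersetCard k (Finset.univ : Finset (Fin n))).filter
      (fun S : Finset (Fin n) => inducedCopy G S ∈ P S.card) =
      Finset.powersetCard k (Finset.univ : Finset (Fin n)) := by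
    rw [Finset.filter_eq_self]; intro S _; exact hP.2 n G hG S
  rw [h1]
  have h2 : (0 : ℝ) ≤ ((Finset.powersetCard k (Finset.univ : Finset (Fin n))).card : ℝ) := by
    positivity
  linarith
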